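/- Adding a generic hyperplane destroys asphericity: let α_1,…,α_n be nonzero linear forms on ℝ^ℓ (ℓ ≥ 3) with ⋂_{i=1}^n ker α_i = {0}, and let β be a nonzero linear form such that for every X ∈ L(A) with X ≠ {0}, X ⊄ ker β (equivalently dim(X ∩ ker β) = dim X − 1). Then the arrangement A ∪ {ker β} admits a locally consistent but globally inconsistent system of half-spaces; consequently π_{ℓ−1}(M(A ∪ {ker β})) ≠ 0 and M(A ∪ {ker β}) is not aspherical. -/

import Mathlib

noncomputable section

/-- Real vector space `ℝ^ℓ`. -/
abbrev Vsp (ℓ : ℕ) : Type := EuclideanSpace ℝ (Fin ℓ)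

/-- The system of half-spaces determined by `ε` is consistent at the intersection
`X = ⋂ i ∈ I, ker (α i)`. -/
def ConsistentAt {ℓ n : ℕ} (α : Fin n → (Vsp ℓ →ₗ[ℝ] ℝ)) (ε : Fin n → ℝ)
    (I : Finset (Fin n)) : Prop :=
  {x : Vsp ℓ | ∀ j : Fin n,
      (⋂ i ∈ I, (LinearMap.ker (α i) : Set (Vsp ℓ))) ⊆ (LinearMap.ker (α j) : Set (Vsp ℓ)) →
      0 < ε j * α j x}.Nonempty

/-- The system of half-spaces is locally consistent: consistent at every nonzero
intersection of hyperplanes. -/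
def LocallyConsistent {ℓ n : ℕ} (α : Fin n → (Vsp ℓ →ₗ[ℝ] ℝ)) (ε : Fin n → ℝ) : Prop :=
  ∀ I : Finset (Fin n),
    (⋂ i ∈ I, (LinearMap.ker (α i) : Set (Vsp ℓ))) ≠ {0} → ConsistentAt α ε I

/-- The `ℂ`-linear extension of a real linear form, evaluated at `z ∈ ℂ^ℓ`. -/
def cLin {ℓ : ℕ} (α : Vsp ℓ →ₗ[ℝ] ℝ) (z : Fin ℓ → ℂ) : ℂ :=
  (α (WithLp.toLp 2 (fun j => (z j).re)) : ℂ) + Complex.I * (α (WithLp.toLp 2 (fun j => (z j).im)) : ℂ)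

/-- The complexified complement `M(A) ⊆ ℂ^ℓ`. -/
def MA {ℓ n : ℕ} (α : Fin n → (Vsp ℓ →ₗ[ℝ] ℝ)) : Set (Fin ℓ → ℂ) :=
  {z | ∀ i, cLin (α i) z ≠ 0}

section Helpers

open Set Metric MeasureTheory Topology


lemma br_det_poly {E : Type*} [NormedAddCommGroup E] [NormedSpace ℝ E] [FiniteDimensional ℝ E]
    (A : E → (E →L[ℝ] E)) (hA : Continuous A) :
    ∃ (N : ℕ) (c : ℕ → E → ℝ), (∀ k, Continuous (c k)) ∧
      ∀ (t : ℝ) (x : E), (1 + t • A x : E →L[ℝ] E).det = ∑ k ∈ Finset.range N, c k x * t ^ k := by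
  classical
  set b := Module.finBasis ℝ E
  set n := Module.finrank ℝ E
  let M : E → Matrix (Fin n) (Fin n) ℝ := fun x => LinearMap.toMatrix b b (A x : E →ₗ[ℝ] E)
  have hM : Continuous M := by
    have h1 : Continuous (fun L : E →L[ℝ] E => LinearMap.toMatrix b b (L : E →ₗ[ℝ] E)) := by
      let T : (E →L[ℝ] E) →ₗ[ℝ] Matrix (Fin n) (Fin n) ℝ :=
        (LinearMap.toMatrix b b).toLinearMap ∘ₗ (ContinuousLinearMap.coeLM ℝ)
      exact T.continuous_of_finiteDimensional
    exact h1.comp hA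
  let q : E → Polynomial ℝ := fun x =>
    (1 + (Polynomial.X : Polynomial ℝ) • (M x).map Polynomial.C).det
  have hq : ∀ x t, (q x).eval t = (1 + t • A x : E →L[ℝ] E).det := by
    intro x t
    have : (1 + t • A x : E →L[ℝ] E).det = (LinearMap.toMatrix b b
        ((1 + t • A x : E →L[ℝ] E) : E →ₗ[ℝ] E)).det := by
      rw [LinearMap.det_toMatrix]
    rw [this]
    have h2 : LinearMap.toMatrix b b ((1 + t • A x : E →L[ℝ] E) : E →ₗ[ℝ] E) = 1 + t • M x := by
      rw [ContinuousLinearMap.toLinearMap_add, ContinuousLinearMap.toLinearMap_smul, map_add, map_smul]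
      congr 1
      exact LinearMap.toMatrix_one b
    rw [h2]
    simp only [q]
    rw [← Polynomial.coe_evalRingHom, RingHom.map_det]
    congr 1
    ext i j
    simp [Matrix.one_apply, apply_ite]
    try exact mul_comm _ _
  have hdeg : ∀ x, ∀ k, n < k → (q x).coeff k = 0 := by
    intro x k hk
    simp only [q]
    rw [Matrix.coeff_det_one_add_X_smul_eq_sum_minors]
    rw [Finset.powersetCard_eq_empty.2 (by simpa using hk)]
    simp
  refine ⟨n + 1, fun k x => (q x).coeff k, ?_, ?_⟩
  · intro k
    simp only [q, Matrix.coeff_det_one_add_X_smul_eq_sum_minors]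
    refine continuous_finsetSum _ fun s _ => ?_
    exact (hM.matrix_submatrix _ _).matrix_det
  · intro t x
    rw [← hq, Polynomial.eval_eq_sum_range' (n := n + 1)]
    rw [Nat.lt_succ_iff, Polynomial.natDegree_le_iff_coeff_eq_zero]
    intro k hk
    exact hdeg x k hk

lemma br_det_pos {E : Type*} [NormedAddCommGroup E] [NormedSpace ℝ E] [FiniteDimensional ℝ E]
    (A : E →L[ℝ] E) (hA : ‖A‖ < 1) : 0 < (1 + A).det := by
  have : CompleteSpace E := FiniteDimensional.complete ℝ E
  have hne : ∀ s ∈ Icc (0:ℝ) 1, (1 + s • A).det ≠ 0 := by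
    intro s hs
    have h1 : ‖-(s • A)‖ < 1 := by
      rw [norm_neg, norm_smul, Real.norm_of_nonneg hs.1]
      calc s * ‖A‖ ≤ 1 * ‖A‖ := by gcongr; exact hs.2
        _ < 1 := by simpa
    have hu : IsUnit (1 + s • A) := by
      have := (Units.oneSub _ h1).isUnit
      simpa using this
    obtain ⟨u, hu⟩ := hu
    intro h0
    have hmul : ((u : E →L[ℝ] E)).det * ((u⁻¹ : (E →L[ℝ] E)ˣ) : E →L[ℝ] E).det = 1 := by
      have : ((u : E →L[ℝ] E) * ((u⁻¹ : (E →L[ℝ] E)ˣ) : E →L[ℝ] E)) = 1 := u.mul_inv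
      have h2 := congrArg ContinuousLinearMap.det this
      rw [show (1 : E →L[ℝ] E).det = 1 from LinearMap.det_id] at h2
      rw [← h2]
      exact (LinearMap.det_comp _ _).symm
    rw [hu, h0] at hmul
    simp at hmul
  have hc : Continuous (fun s : ℝ => (1 + s • A).det) := by
    obtain ⟨N, c, hc, h⟩ := br_det_poly (fun _ : E => A) continuous_const
    have : (fun s : ℝ => (1 + s • A).det) = fun s => ∑ k ∈ Finset.range N, c k 0 * s ^ k := by
      funext s; exact h s 0
    rw [this]; fun_prop
  by_contra hneg
  push Not at hneg
  have hivt := intermediate_value_Icc' (zero_le_one (α := ℝ)) hc.continuousOn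
  have : (0:ℝ) ∈ Icc ((1 + (1:ℝ) • A).det) ((1 + (0:ℝ) • A).det) := by
    constructor
    · simpa using hneg
    · rw [zero_smul, add_zero, show (1 : E →L[ℝ] E).det = 1 from LinearMap.det_id]; norm_num
  obtain ⟨s, hs, h0⟩ := hivt this
  exact hne s hs h0

/-- gluing Lipschitz maps across a sphere -/
lemma br_lip_glue {E : Type*} [NormedAddCommGroup E] [NormedSpace ℝ E]
    (k : E → E) (R : ℝ) (K : NNReal) (hk : LipschitzOnWith K k (closedBall 0 R))
    (h0 : ∀ x, R ≤ ‖x‖ → k x = 0) : LipschitzWith K k := by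
  have key : ∀ x y, ‖x‖ ≤ R → R ≤ ‖y‖ → dist (k x) (k y) ≤ K * dist x y := by
    intro x y hx hy
    have hcont : ContinuousOn (fun s : ℝ => ‖x + s • (y - x)‖) (Icc 0 1) := by fun_prop
    have : R ∈ Icc (‖x + (0:ℝ) • (y - x)‖) (‖x + (1:ℝ) • (y - x)‖) := by
      constructor <;> simp [hx, hy]
    obtain ⟨s, hs, hsR⟩ := intermediate_value_Icc zero_le_one hcont this
    simp only at hsR
    set z := x + s • (y - x)
    have hz : k z = k y := by rw [h0 z hsR.ge, h0 y hy]
    rw [← hz]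
    have h1 := hk.dist_le_mul x (by simpa using hx) z (by simpa using hsR.le)
    refine h1.trans ?_
    gcongr
    rw [dist_eq_norm, dist_eq_norm]
    have : x - z = s • (x - y) := by simp only [z]; module
    rw [this, norm_smul, Real.norm_of_nonneg hs.1]
    exact mul_le_of_le_one_left (norm_nonneg _) hs.2
  refine LipschitzWith.of_dist_le_mul fun x y => ?_
  rcases le_total ‖x‖ R with hx | hx <;> rcases le_total ‖y‖ R with hy | hy
  · exact hk.dist_le_mul x (by simpa using hx) y (by simpa using hy)
  · exact key x y hx hy
  · rw [dist_comm, dist_comm x]; exact key y x hy hx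
  · rw [h0 x hx, h0 y hy]; simp; positivity

/-- no smooth retraction -/
lemma br_smooth {m : ℕ} (r : EuclideanSpace ℝ (Fin m) → EuclideanSpace ℝ (Fin m)) (R : ℝ)
    (hR : 0 < R) (hr : ContDiff ℝ 1 r) (hn : ∀ x, ‖r x‖ = R) (hS : ∀ x, ‖x‖ = R → r x = x) :
    False := by
  let k1 : (EuclideanSpace ℝ (Fin m)) → (EuclideanSpace ℝ (Fin m)) := fun x => r x - x
  have hk1 : ContDiff ℝ 1 k1 := hr.sub contDiff_id
  let k : (EuclideanSpace ℝ (Fin m)) → (EuclideanSpace ℝ (Fin m)) := fun x => if ‖x‖ < R then k1 x else 0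
  have hkeq : EqOn k k1 (closedBall 0 R) := by
    intro x hx
    simp only [k]
    split_ifs with h
    · rfl
    · have : ‖x‖ = R := le_antisymm (by simpa using hx) (not_lt.1 h)
      simp [k1, hS x this]
  obtain ⟨K, hK⟩ := hk1.contDiffOn.exists_lipschitzOnWith one_ne_zero (convex_closedBall (0:(EuclideanSpace ℝ (Fin m))) R)
    (isCompact_closedBall 0 R)
  have hkL : LipschitzWith K k := by
    apply br_lip_glue k R K
    · exact fun x hx y hy => by rw [hkeq hx, hkeq hy]; exact hK hx hy
    · intro x hx; simp [k, not_lt.2 hx]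
  have hA : Continuous (fderiv ℝ k1) := hk1.continuous_fderiv one_ne_zero
  obtain ⟨N, c, hc, hdet⟩ := br_det_poly (fderiv ℝ k1) hA
  have hintg : ∀ j, IntegrableOn (c j) (ball 0 R) volume := fun j =>
    ((hc j).continuousOn.integrableOn_compact (isCompact_closedBall 0 R)).mono_set
      ball_subset_closedBall
  let P : ℝ → ℝ := fun t => ∑ j ∈ Finset.range N, (∫ x in ball 0 R, c j x) * t ^ j
  have hP : ∀ t, ∫ x in ball (0:(EuclideanSpace ℝ (Fin m))) R, (1 + t • fderiv ℝ k1 x).det = P t := by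
    intro t
    simp only [hdet, P]
    rw [integral_finsetSum]
    · simp [integral_mul_const]
    · intro j _; exact (hintg j).mul_const _
  have hintd : ∀ t : ℝ, IntegrableOn (fun x => (1 + t • fderiv ℝ k1 x).det) (ball 0 R) volume := by
    intro t
    simp only [hdet]
    exact integrable_finsetSum _ fun j _ => (hintg j).mul_const _
  -- small t
  have hsmall : ∀ t : ℝ, 0 < t → t * (K + 1) < 1 → P t = (volume (ball (0:(EuclideanSpace ℝ (Fin m))) R)).toReal := by
    intro t ht htK
    have hKK : t * K < 1 := by nlinarith
    let h : (EuclideanSpace ℝ (Fin m)) → (EuclideanSpace ℝ (Fin m)) := fun x => x + t • k x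
    have happ : ApproximatesLinearOn h ((ContinuousLinearEquiv.refl ℝ (EuclideanSpace ℝ (Fin m)) : (EuclideanSpace ℝ (Fin m)) ≃L[ℝ] (EuclideanSpace ℝ (Fin m))) : (EuclideanSpace ℝ (Fin m)) →L[ℝ] (EuclideanSpace ℝ (Fin m))) univ
        (Real.toNNReal t * K) := by
      intro x _ y _
      have : h x - h y - ((ContinuousLinearEquiv.refl ℝ (EuclideanSpace ℝ (Fin m)) : (EuclideanSpace ℝ (Fin m)) ≃L[ℝ] (EuclideanSpace ℝ (Fin m))) : (EuclideanSpace ℝ (Fin m)) →L[ℝ] (EuclideanSpace ℝ (Fin m))) (x - y)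
        = t • (k x - k y) := by simp [h]; module
      rw [this, norm_smul, Real.norm_of_nonneg ht.le]
      have := hkL.dist_le_mul x y
      rw [dist_eq_norm, dist_eq_norm] at this
      push_cast
      rw [Real.coe_toNNReal _ ht.le, mul_assoc]
      gcongr
    have hcond : Subsingleton (EuclideanSpace ℝ (Fin m)) ∨ Real.toNNReal t * K <
        ‖(((ContinuousLinearEquiv.refl ℝ (EuclideanSpace ℝ (Fin m)) : (EuclideanSpace ℝ (Fin m)) ≃L[ℝ] (EuclideanSpace ℝ (Fin m)))).symm : (EuclideanSpace ℝ (Fin m)) →L[ℝ] (EuclideanSpace ℝ (Fin m)))‖₊⁻¹ := by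
      rcases subsingleton_or_nontrivial (EuclideanSpace ℝ (Fin m)) with hs | hs
      · exact Or.inl hs
      · right
        have : ‖(((ContinuousLinearEquiv.refl ℝ (EuclideanSpace ℝ (Fin m)) : (EuclideanSpace ℝ (Fin m)) ≃L[ℝ] (EuclideanSpace ℝ (Fin m)))).symm : (EuclideanSpace ℝ (Fin m)) →L[ℝ] (EuclideanSpace ℝ (Fin m)))‖₊ = 1 := by
          have : (((ContinuousLinearEquiv.refl ℝ (EuclideanSpace ℝ (Fin m)) : (EuclideanSpace ℝ (Fin m)) ≃L[ℝ] (EuclideanSpace ℝ (Fin m)))).symm : (EuclideanSpace ℝ (Fin m)) →L[ℝ] (EuclideanSpace ℝ (Fin m)))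
            = ContinuousLinearMap.id ℝ (EuclideanSpace ℝ (Fin m)) := rfl
          rw [this]
          exact NNReal.eq (by simp)
        rw [this, inv_one, ← NNReal.coe_lt_coe]
        push_cast
        rw [Real.coe_toNNReal _ ht.le]
        exact hKK
    have hinj : Function.Injective h := injOn_univ.1 (happ.injOn hcond)
    have hsurj : Function.Surjective h := happ.surjective hcond
    have hout : ∀ x, ¬ (‖x‖ < R) → h x = x := by
      intro x hx; simp [h, k, hx]
    have himg : Set.image h (ball 0 R) = ball 0 R := by
      ext y
      simp only [mem_image, mem_ball_zero_iff]
      constructor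
      · rintro ⟨x, hx, rfl⟩
        by_contra hh
        have := hinj (hout _ hh)
        rw [this] at hh
        exact hh hx
      · intro hy
        obtain ⟨x, rfl⟩ := hsurj y
        refine ⟨x, ?_, rfl⟩
        by_contra hh
        rw [hout x hh] at hy
        exact hh hy
    have hderiv : ∀ x ∈ ball (0:(EuclideanSpace ℝ (Fin m))) R, HasFDerivWithinAt h (1 + t • fderiv ℝ k1 x) (ball 0 R) x := by
      intro x hx
      have h1 : HasFDerivAt k1 (fderiv ℝ k1 x) x :=
        (hk1.differentiable one_ne_zero x).hasFDerivAt
      have h2 : HasFDerivAt (fun x => x + t • k1 x) (1 + t • fderiv ℝ k1 x) x :=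
        (hasFDerivAt_id x).add (h1.const_smul t)
      refine h2.hasFDerivWithinAt.congr (fun y hy => ?_) ?_
      · simp only [h, hkeq (ball_subset_closedBall hy)]
      · simp only [h, hkeq (ball_subset_closedBall hx)]
    have hcv := lintegral_abs_det_fderiv_eq_addHaar_image volume measurableSet_ball hderiv hinj.injOn
    rw [himg] at hcv
    have hpos : ∀ x ∈ ball (0:(EuclideanSpace ℝ (Fin m))) R, 0 < (1 + t • fderiv ℝ k1 x).det := by
      intro x hx
      apply br_det_pos
      have := norm_fderiv_le_of_lipschitzOn ℝ (mem_nhds_iff.2 ⟨ball 0 R, ball_subset_closedBall,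
        isOpen_ball, hx⟩) hK
      rw [norm_smul, Real.norm_of_nonneg ht.le]
      calc t * ‖fderiv ℝ k1 x‖ ≤ t * K := by gcongr
        _ < 1 := hKK
    rw [← hP, ← hcv, ← ENNReal.toReal_ofReal (r := ∫ x in ball (0:(EuclideanSpace ℝ (Fin m))) R, (1 + t • fderiv ℝ k1 x).det)]
    · congr 1
      rw [ofReal_integral_eq_lintegral_ofReal (hintd t)]
      · refine setLIntegral_congr_fun measurableSet_ball fun x hx => ?_
        simp only [abs_of_pos (hpos x hx)]
      · filter_upwards [ae_restrict_mem measurableSet_ball] with x hx using (hpos x hx).le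
    · exact setIntegral_nonneg measurableSet_ball fun x hx => (hpos x hx).le
  -- polynomial identity
  have hP1 : P 1 = (volume (ball (0:(EuclideanSpace ℝ (Fin m))) R)).toReal := by
    let Q : Polynomial ℝ := ∑ j ∈ Finset.range N, Polynomial.C (∫ x in ball (0:(EuclideanSpace ℝ (Fin m))) R, c j x) * Polynomial.X ^ j
    have hQ : ∀ t, Q.eval t = P t := by
      intro t; simp [Q, P, Polynomial.eval_finsetSum]
    have : Q = Polynomial.C (volume (ball (0:(EuclideanSpace ℝ (Fin m))) R)).toReal := by
      apply Polynomial.eq_of_infinite_eval_eq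
      refine Set.Infinite.mono (s := Ioo (0:ℝ) (1 / (K + 1))) ?_ (Ioo_infinite (by positivity))
      intro t ht
      simp only [mem_ofPred_eq, hQ, Polynomial.eval_C]
      refine hsmall t ht.1 ?_
      have := ht.2
      rwa [lt_div_iff₀ (by positivity)] at this
    rw [← hQ, this, Polynomial.eval_C]
  have hP0 : P 1 = 0 := by
    rw [← hP]
    have : ∀ x : (EuclideanSpace ℝ (Fin m)), (1 + (1:ℝ) • fderiv ℝ k1 x).det = 0 := by
      intro x
      have hd := (hr.differentiable one_ne_zero x)
      have h1 : (1 + (1:ℝ) • fderiv ℝ k1 x) = fderiv ℝ r x := by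
        have : fderiv ℝ k1 x = fderiv ℝ r x - 1 := by
          have := hd.hasFDerivAt.sub (hasFDerivAt_id x)
          exact this.fderiv
        rw [this]; simp
      rw [h1]
      by_contra hne
      have hsurj : Function.Surjective (fderiv ℝ r x) := by
        let e := LinearMap.equivOfDetNeZero (fderiv ℝ r x : (EuclideanSpace ℝ (Fin m)) →ₗ[ℝ] (EuclideanSpace ℝ (Fin m))) hne
        intro y
        obtain ⟨z, hz⟩ := e.surjective y
        exact ⟨z, hz⟩
      obtain ⟨v, hv⟩ := hsurj (r x)
      have h2 : HasFDerivAt (fun y => inner ℝ (r y) (r y)) _ x :=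
        hd.hasFDerivAt.inner ℝ hd.hasFDerivAt
      have h3 : (fun y => inner ℝ (r y) (r y)) = fun _ : (EuclideanSpace ℝ (Fin m)) => R ^ 2 := by
        funext y; rw [real_inner_self_eq_norm_sq, hn]
      rw [h3] at h2
      have h4 := congrArg (fun L : (EuclideanSpace ℝ (Fin m)) →L[ℝ] ℝ => L v) (h2.unique (hasFDerivAt_const _ _))
      simp [fderivInnerCLM_apply, hv] at h4
      have := hn x
      rw [h4] at this
      simp at this; linarith
    simp only [this]; simp
  rw [hP0] at hP1
  have := ENNReal.toReal_pos (measure_ball_pos volume (0:(EuclideanSpace ℝ (Fin m))) hR).ne' measure_ball_lt_top.ne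
  linarith

lemma br_eucl {m : ℕ} (G : EuclideanSpace ℝ (Fin m) → EuclideanSpace ℝ (Fin m))
    (hG : Continuous G) (h0 : ∀ x, G x ≠ 0) (ρ : ℝ) (hρ : ∀ x, ρ ≤ ‖x‖ → G x = x) : False := by
  obtain ⟨g, hg, hgG, hgS, -⟩ := hG.exists_contDiff_approx_and_eqOn 1 (ε := fun x => ‖G x‖)
    hG.norm (fun x => norm_pos_iff.2 (h0 x)) (S := {x | |ρ| + 1 ≤ ‖x‖}) (U := {x | |ρ| < ‖x‖})
    (isClosed_le continuous_const continuous_norm)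
    ((isOpen_lt continuous_const continuous_norm).mem_nhdsSet.2 (fun x hx => by
      simp only [mem_ofPred_eq] at hx ⊢; linarith))
    (contDiffOn_id.congr (fun x hx => hρ x ((le_abs_self ρ).trans (le_of_lt hx))))
  have hg0 : ∀ x, g x ≠ 0 := by
    intro x hx
    have := hgG x
    rw [hx, dist_zero_left] at this
    exact lt_irrefl _ this
  set R := |ρ| + 1
  have hR : 0 < R := by positivity
  refine br_smooth (fun x => (R * ‖g x‖⁻¹) • g x) R hR ?_ ?_ ?_
  · exact (contDiff_const.mul ((hg.norm ℝ hg0).inv (fun x => norm_ne_zero_iff.2 (hg0 x)))).smul hg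
  · intro x
    have := norm_ne_zero_iff.2 (hg0 x)
    rw [norm_smul, norm_mul, norm_inv, norm_norm, Real.norm_of_nonneg hR.le]
    field_simp
  · intro x hx
    have : g x = x := by
      rw [hgS (show R ≤ ‖x‖ from hx.ge)]
      exact hρ x (by rw [hx]; have := le_abs_self ρ; simp only [R]; linarith)
    simp only [this, hx]
    rw [mul_inv_cancel₀ hR.ne', one_smul]

lemma br_main {E : Type*} [NormedAddCommGroup E] [NormedSpace ℝ E] [FiniteDimensional ℝ E]
    (G : E → E) (hG : ContinuousOn G (closedBall 0 1)) (h0 : ∀ x ∈ closedBall (0:E) 1, G x ≠ 0)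
    (hS : ∀ x, ‖x‖ = 1 → ∀ l : ℝ, 0 < l → G x ≠ -(l • x)) : False := by
  let pr : E → E := fun x => (max 1 ‖x‖)⁻¹ • x
  have hprc : Continuous pr := by
    refine Continuous.smul (Continuous.inv₀ (by fun_prop) fun x => ?_) continuous_id
    positivity
  have hprn : ∀ x, pr x ∈ closedBall (0:E) 1 := by
    intro x
    simp only [pr, mem_closedBall_zero_iff, norm_smul, norm_inv]
    rw [Real.norm_of_nonneg (by positivity), inv_mul_le_iff₀ (by positivity)]
    simp
  let a : E → ℝ := fun x => max 0 (min 1 (2 - ‖x‖))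
  have ha : Continuous a := by fun_prop
  let G1 : E → E := fun x => a x • G (pr x) + (1 - a x) • x
  have hG1c : Continuous G1 := by
    have : Continuous (fun x => G (pr x)) := hG.comp_continuous hprc hprn
    exact (ha.smul this).add ((continuous_const.sub ha).smul continuous_id)
  have hG10 : ∀ x, G1 x ≠ 0 := by
    intro x hx
    simp only [G1] at hx
    rcases le_or_gt ‖x‖ 1 with h1 | h1
    · have ha1 : a x = 1 := by
        simp only [a]; rw [min_eq_left (by linarith), max_eq_right (by norm_num)]
      have hp : pr x = x := by simp [pr, max_eq_left h1]
      rw [ha1, hp] at hx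
      simp at hx
      exact h0 x (by simpa using h1) hx
    · have ha' : a x = max 0 (2 - ‖x‖) := by
        simp only [a]; rw [min_eq_right (by linarith)]
      have hxne : x ≠ 0 := by rintro rfl; simp at h1; linarith
      have hxpos : 0 < ‖x‖ := norm_pos_iff.2 hxne
      rcases le_or_gt 2 ‖x‖ with h2 | h2
      · rw [ha', max_eq_left (by linarith)] at hx
        simp at hx
        exact hxne hx
      · rw [max_eq_right (by linarith)] at ha'
        have hp : pr x = ‖x‖⁻¹ • x := by simp [pr, max_eq_right h1.le]
        have hapos : 0 < a x := by rw [ha']; linarith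
        refine hS (pr x) ?_ ((a x)⁻¹ * (1 - a x) * ‖x‖) ?_ ?_
        · rw [hp, norm_smul, norm_inv, norm_norm, inv_mul_cancel₀ hxpos.ne']
        · have : 0 < 1 - a x := by rw [ha']; linarith
          positivity
        · have h3 : a x • G (pr x) = -((1 - a x) • x) := eq_neg_of_add_eq_zero_left hx
          have h4 : G (pr x) = (a x)⁻¹ • (a x • G (pr x)) := by
            rw [smul_smul, inv_mul_cancel₀ hapos.ne', one_smul]
          rw [h4, h3, hp, smul_neg, smul_smul, smul_smul]
          congr 2
          field_simp
  have hG1out : ∀ x, 2 ≤ ‖x‖ → G1 x = x := by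
    intro x hx
    have : a x = 0 := by
      simp only [a]; rw [min_eq_right (by linarith), max_eq_left (by linarith)]
    simp [G1, this]
  let e := toEuclidean (E := E)
  let e' : E ≃L[ℝ] EuclideanSpace ℝ (Fin (Module.finrank ℝ E)) := e
  refine br_eucl (fun y => e' (G1 (e'.symm y))) (by fun_prop) ?_ ((‖(e' : E →L[ℝ] EuclideanSpace ℝ (Fin (Module.finrank ℝ E)))‖ + 1) * 2) ?_
  · intro y
    simpa using hG10 _
  · intro y hy
    by_cases hn : 2 ≤ ‖e'.symm y‖
    · simp [hG1out _ hn]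
    · exfalso
      push Not at hn
      have h1 := (e' : E →L[ℝ] EuclideanSpace ℝ (Fin (Module.finrank ℝ E))).le_opNorm (e'.symm y)
      have h2 : (e' : E →L[ℝ] EuclideanSpace ℝ (Fin (Module.finrank ℝ E))) (e'.symm y) = y := by simp
      rw [h2] at h1
      have h3 := norm_nonneg (e' : E →L[ℝ] EuclideanSpace ℝ (Fin (Module.finrank ℝ E)))
      nlinarith


def fq {d : ℕ} (u : Fin d → ℝ) : ℝ × (Fin d → ℝ) := (1 - 2 * ‖u‖, (1 - ‖u‖) • u)

lemma fq_cont {d : ℕ} : Continuous (fq (d := d)) := by unfold fq; fun_prop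

lemma fq_ne {d : ℕ} (u : Fin d → ℝ) : fq u ≠ 0 := by
  intro h
  simp only [fq, Prod.mk_eq_zero] at h
  obtain ⟨h1, h2⟩ := h
  rcases smul_eq_zero.1 h2 with h | h
  · linarith
  · rw [h] at h1; simp at h1

def fqn {d : ℕ} (u : Fin d → ℝ) : ℝ × (Fin d → ℝ) := ‖fq u‖⁻¹ • fq u

lemma fqn_cont {d : ℕ} : Continuous (fqn (d := d)) :=
  (fq_cont.norm.inv₀ fun u => norm_ne_zero_iff.2 (fq_ne u)).smul fq_cont

lemma fqn_norm {d : ℕ} (u : Fin d → ℝ) : ‖fqn u‖ = 1 := by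
  rw [fqn, norm_smul, norm_inv, norm_norm, inv_mul_cancel₀ (norm_ne_zero_iff.2 (fq_ne u))]

lemma fqn_surj {d : ℕ} (hd : 0 < d) (x : ℝ × (Fin d → ℝ)) (hx : ‖x‖ = 1) :
    ∃ u, ‖u‖ ≤ 1 ∧ fqn u = x := by
  have key : ∀ (u : Fin d → ℝ) (c : ℝ), 0 < c → fq u = c • x → fqn u = x := by
    intro u c hc h
    rw [fqn, h, norm_smul, hx, Real.norm_of_nonneg hc.le, smul_smul, mul_one, inv_mul_cancel₀ hc.ne',
      one_smul]
  obtain ⟨h, v⟩ := x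
  by_cases hv : v = 0
  · subst hv
    rw [Prod.norm_def] at hx
    simp at hx
    rcases eq_or_eq_neg_of_abs_eq hx with rfl | rfl
    · exact ⟨0, by simp, key 0 1 one_pos (by simp [fq])⟩
    · have : Nonempty (Fin d) := ⟨⟨0, hd⟩⟩
      have h1 : ‖(fun _ => 1 : Fin d → ℝ)‖ = 1 := by simp
      refine ⟨fun _ => 1, h1.le, key _ 1 one_pos ?_⟩
      rw [fq, h1]; norm_num
  · have hvp : 0 < ‖v‖ := norm_pos_iff.2 hv
    have hc : ContinuousOn (fun r : ℝ => (1 - 2 * r) * ‖v‖ - h * ((1 - r) * r)) (Icc 0 1) := by fun_prop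
    have h0 : (0:ℝ) ∈ Ioo ((1 - 2 * 1) * ‖v‖ - h * ((1 - 1) * 1)) ((1 - 2 * 0) * ‖v‖ - h * ((1 - 0) * 0)) := by
      constructor
      · nlinarith
      · nlinarith
    obtain ⟨r, hr, hr0⟩ := intermediate_value_Ioo' (zero_le_one (α := ℝ)) hc h0
    simp only at hr0
    have hn : ‖(r / ‖v‖) • v‖ = r := by
      rw [norm_smul, norm_div, norm_norm, Real.norm_of_nonneg hr.1.le]; field_simp
    refine ⟨(r / ‖v‖) • v, by rw [hn]; exact hr.2.le, key _ ((1 - r) * r / ‖v‖) ?_ ?_⟩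
    · have := hr.1; have : 0 < 1 - r := by linarith [hr.2]
      positivity
    · rw [fq, hn]
      ext1
      · simp; field_simp; linarith
      · simp [smul_smul]; congr 1; ring

lemma fqn_inj {d : ℕ} (u u' : Fin d → ℝ) (hu : ‖u‖ ≤ 1) (hu' : ‖u'‖ ≤ 1) (h : fqn u = fqn u') :
    u = u' ∨ (‖u‖ = 1 ∧ ‖u'‖ = 1) := by
  have hl : ∃ l : ℝ, 0 < l ∧ fq u = l • fq u' := by
    have h1 := norm_pos_iff.2 (fq_ne u)
    have h2 := norm_pos_iff.2 (fq_ne u')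
    refine ⟨‖fq u‖ * ‖fq u'‖⁻¹, by positivity, ?_⟩
    rw [mul_smul]
    change fq u = ‖fq u‖ • fqn u'
    rw [← h, fqn, smul_smul, mul_inv_cancel₀ h1.ne', one_smul]
  obtain ⟨l, hl, e⟩ := hl
  simp only [fq, Prod.smul_mk, Prod.mk.injEq, smul_smul, smul_eq_mul] at e
  obtain ⟨e1, e2⟩ := e
  have e3 := congrArg norm e2
  rw [norm_smul, norm_smul, Real.norm_of_nonneg (by linarith),
    Real.norm_of_nonneg (mul_nonneg hl.le (by linarith))] at e3
  have hr := norm_nonneg u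
  have hr' := norm_nonneg u'
  by_cases h1 : ‖u‖ = 1
  · right; refine ⟨h1, ?_⟩
    rw [h1] at e1 e3
    have : l * ((1 - ‖u'‖) * ‖u'‖) = 0 := by linarith
    rcases mul_eq_zero.1 this with h | h
    · linarith
    · rcases mul_eq_zero.1 h with h | h
      · linarith
      · rw [h] at e1; linarith
  · have hlt : 0 < 1 - ‖u‖ := by rcases lt_or_eq_of_le hu with h | h <;> [linarith; exact absurd h h1]
    by_cases h1' : ‖u'‖ = 1
    · exfalso
      rw [h1'] at e1 e3
      have : (1 - ‖u‖) * ‖u‖ = 0 := by linarith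
      rcases mul_eq_zero.1 this with h | h
      · linarith
      · rw [h] at e1; linarith
    · left
      have hlt' : 0 < 1 - ‖u'‖ := by rcases lt_or_eq_of_le hu' with h | h <;> [linarith; exact absurd h h1']
      have e4 : l * ((‖u'‖ - ‖u‖) * ((1 - ‖u‖) * (1 - ‖u'‖) + ‖u‖ * ‖u'‖)) = 0 := by
        linear_combination (l * (1 - ‖u'‖) * ‖u'‖) * e1 - l * (1 - 2 * ‖u'‖) * e3
      have hpos : 0 < (1 - ‖u‖) * (1 - ‖u'‖) + ‖u‖ * ‖u'‖ := by positivity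
      have hrr : ‖u'‖ = ‖u‖ := by
        rcases mul_eq_zero.1 e4 with h | h
        · exact absurd h hl.ne'
        · rcases mul_eq_zero.1 h with h | h
          · linarith
          · exact absurd h hpos.ne'
      by_cases hz : ‖u‖ = 0
      · rw [norm_eq_zero.1 hz, norm_eq_zero.1 (hrr.trans hz)]
      · have hl1 : l = 1 := by
          rw [hrr] at e3
          have : (l - 1) * ((1 - ‖u‖) * ‖u‖) = 0 := by linarith
          rcases mul_eq_zero.1 this with h | h
          · linarith
          · exact absurd h (mul_ne_zero hlt.ne' hz)
        rw [hl1, hrr, one_mul] at e2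
        exact smul_right_injective _ hlt.ne' e2

lemma fill_main {X : Type*} [TopologicalSpace X] [PathConnectedSpace X] (d : ℕ) (hd : 0 < d) (x₀ : X)
    (hsub : ∀ f : GenLoop (Fin d) X x₀, GenLoop.Homotopic f GenLoop.const)
    (σ : ℝ × (Fin d → ℝ) → X) (hσ : ContinuousOn σ (sphere 0 1)) :
    ∃ F : ℝ × (Fin d → ℝ) → X, ContinuousOn F (closedBall 0 1) ∧ EqOn F σ (sphere 0 1) := by
  classical
  let u : (Fin d → unitInterval) → (Fin d → ℝ) := fun y i => 2 * (y i : ℝ) - 1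
  have huc : Continuous u := by fun_prop
  have hun : ∀ y, ‖u y‖ ≤ 1 := by
    intro y
    rw [pi_norm_le_iff_of_nonneg zero_le_one]
    intro i
    rw [Real.norm_eq_abs, abs_le]
    have := (y i).2.1; have := (y i).2.2
    simp only [u]; constructor <;> linarith
  have hub : ∀ y, y ∈ Cube.boundary (Fin d) ↔ ‖u y‖ = 1 := by
    intro y
    constructor
    · rintro ⟨i, hi⟩
      refine le_antisymm (hun y) ?_
      refine le_trans ?_ (norm_le_pi_norm (u y) i)
      rcases hi with hi | hi <;> simp [u, hi] <;> norm_num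
    · intro h
      by_contra hb
      have : ‖u y‖ < 1 := by
        rw [pi_norm_lt_iff zero_lt_one]
        intro i
        have h0 : y i ≠ 0 := fun h => hb ⟨i, Or.inl h⟩
        have h1 : y i ≠ 1 := fun h => hb ⟨i, Or.inr h⟩
        have h0 := unitInterval.pos_iff_ne_zero.2 h0
        have h1 := unitInterval.lt_one_iff_ne_one.2 h1
        rw [Real.norm_eq_abs, abs_lt]
        have h0' : (0:ℝ) < y i := h0
        have h1' : (y i : ℝ) < 1 := h1
        simp only [u]; constructor <;> linarith
      linarith
  let x₁ := σ (-1, 0)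
  obtain ⟨γ⟩ := PathConnectedSpace.joined x₁ x₀
  have hσq : Continuous (fun w : Fin d → ℝ => σ (fqn w)) :=
    hσ.comp_continuous fqn_cont (fun w => by simp [fqn_norm])
  have hq1 : ∀ w : Fin d → ℝ, ‖w‖ = 1 → σ (fqn w) = x₁ := by
    intro w hw
    have : fq w = (-1, 0) := by rw [fq, hw]; norm_num
    have h2 : fqn w = (-1, 0) := by
      rw [fqn, this, Prod.norm_def]; simp
    rw [h2]
  let f1 : (Fin d → ℝ) → X := fun w => if ‖w‖ ≤ 1 then σ (fqn w) else γ.extend (‖w‖ - 1)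
  have hf1 : Continuous f1 := by
    refine Continuous.if_le hσq (γ.continuous_extend.comp (by fun_prop)) continuous_norm continuous_const ?_
    intro w hw
    rw [hq1 w hw]; simp [hw]
  have hf2 : ∀ w, 1 ≤ ‖w‖ → f1 w = γ.extend (‖w‖ - 1) := by
    intro w hw
    simp only [f1]
    split_ifs with h
    · have h := le_antisymm h hw
      rw [hq1 w h, h]; simp
    · rfl
  let fh : GenLoop (Fin d) X x₀ := ⟨⟨fun y => f1 ((2:ℝ) • u y), by fun_prop⟩, by
    intro y hy
    rw [hub] at hy
    have : ‖(2:ℝ) • u y‖ = 2 := by rw [norm_smul, hy]; simp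
    simp only [ContinuousMap.coe_mk]
    rw [hf2 _ (by rw [this]; norm_num), this]
    norm_num⟩
  obtain ⟨H⟩ := hsub fh
  let K : (Fin d → unitInterval) × unitInterval → X := fun p =>
    if (p.2 : ℝ) ≤ 1 / 2 then f1 ((1 + 2 * (p.2:ℝ)) • u p.1) else
      H (Set.projIcc 0 1 zero_le_one (2 * (p.2:ℝ) - 1), p.1)
  have hK : Continuous K := by
    refine Continuous.if_le (by fun_prop) ?_ (by fun_prop) continuous_const ?_
    · exact H.continuous.comp ((continuous_projIcc.comp (by fun_prop)).prodMk continuous_fst)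
    · intro p hp
      rw [hp]
      have : Set.projIcc (0:ℝ) 1 zero_le_one (2 * (1/2) - 1) = 0 := by
        apply Subtype.ext; simp
      rw [this, H.apply_zero]
      simp only [fh, ContinuousMap.coe_mk]
      norm_num
  have hK1 : ∀ y, K (y, 1) = x₀ := by
    intro y
    have h1 : ¬ (((1:unitInterval):ℝ) ≤ 1/2) := by norm_num
    have : Set.projIcc (0:ℝ) 1 zero_le_one (2 * ((1:unitInterval):ℝ) - 1) = 1 := by
      apply Subtype.ext; norm_num [Set.projIcc]
    simp only [K, if_neg h1, this]
    rw [H.apply_one]; rfl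
  have hKb : ∀ y y' t, ‖u y‖ = 1 → ‖u y'‖ = 1 → K (y, t) = K (y', t) := by
    intro y y' t hy hy'
    simp only [K]
    split_ifs with h
    · have h0 := t.2.1
      have hn : ∀ y, ‖u y‖ = 1 → ‖(1 + 2 * (t:ℝ)) • u y‖ = 1 + 2 * t := by
        intro y hy
        rw [norm_smul, hy, Real.norm_of_nonneg (by positivity)]; ring
      rw [hf2 _ (by rw [hn y hy]; linarith), hf2 _ (by rw [hn y' hy']; linarith), hn y hy, hn y' hy']
    · rw [H.eq_fst _ ((hub y).2 hy), H.eq_fst _ ((hub y').2 hy')]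
      exact (fh.2 _ ((hub y).2 hy)).trans (fh.2 _ ((hub y').2 hy')).symm
  let Q : (Fin d → unitInterval) × unitInterval → closedBall (0 : ℝ × (Fin d → ℝ)) 1 := fun p =>
    ⟨(1 - (p.2:ℝ)) • fqn (u p.1), by
      rw [mem_closedBall_zero_iff, norm_smul, fqn_norm, Real.norm_of_nonneg (by linarith [p.2.2.2])]
      linarith [p.2.2.1]⟩
  have hQc : Continuous Q := by
    have h1 : Continuous (fun p : (Fin d → unitInterval) × unitInterval => (1 - (p.2:ℝ))) := by fun_prop
    have h2 : Continuous (fun p : (Fin d → unitInterval) × unitInterval => u p.1) := by fun_prop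
    exact Continuous.subtype_mk (h1.smul (fqn_cont.comp h2)) _
  have hQn : ∀ p, ‖(Q p : ℝ × (Fin d → ℝ))‖ = 1 - p.2 := by
    intro p
    simp only [Q]
    rw [norm_smul, fqn_norm, Real.norm_of_nonneg (by linarith [p.2.2.2])]; ring
  have hpre : ∀ w : Fin d → ℝ, ‖w‖ ≤ 1 → ∃ y, u y = w := by
    intro w hw
    have hi : ∀ i, |w i| ≤ 1 := fun i => (norm_le_pi_norm w i).trans hw
    refine ⟨fun i => ⟨(w i + 1) / 2, ?_⟩, ?_⟩
    · have := abs_le.1 (hi i); constructor <;> linarith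
    · funext i; simp only [u]; ring
  have hQs : Function.Surjective Q := by
    rintro ⟨x, hx⟩
    rw [mem_closedBall_zero_iff] at hx
    by_cases h0 : x = 0
    · exact ⟨(fun _ => 0, 1), Subtype.ext (by simp [Q, h0])⟩
    · have hxp := norm_pos_iff.2 h0
      obtain ⟨w, hw, hwx⟩ := fqn_surj hd (‖x‖⁻¹ • x) (by
        rw [norm_smul, norm_inv, norm_norm, inv_mul_cancel₀ hxp.ne'])
      obtain ⟨y, rfl⟩ := hpre w hw
      refine ⟨(y, ⟨1 - ‖x‖, by constructor <;> linarith⟩), Subtype.ext ?_⟩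
      simp only [Q, hwx, smul_smul]
      rw [sub_sub_cancel, mul_inv_cancel₀ hxp.ne', one_smul]
  have hQq : IsQuotientMap Q := hQc.isClosedMap.isQuotientMap hQc hQs
  have hfib : ∀ p p', Q p = Q p' → K p = K p' := by
    rintro ⟨y, t⟩ ⟨y', t'⟩ h
    have ht : t = t' := by
      apply Subtype.ext
      have h1 := hQn (y, t); have h2 := hQn (y', t')
      rw [h] at h1; simp only at h1 h2; linarith
    subst ht
    by_cases h1 : t = 1
    · rw [h1, hK1, hK1]
    · have h1' : (0:ℝ) < 1 - t := by
        have : (t:ℝ) < 1 := unitInterval.lt_one_iff_ne_one.2 h1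
        linarith
      have h2 := congrArg Subtype.val h
      simp only [Q] at h2
      have h3 := smul_right_injective _ h1'.ne' h2
      rcases fqn_inj _ _ (hun y) (hun y') h3 with h4 | h4
      · have : y = y' := by
          funext i
          have := congrFun h4 i
          simp only [u] at this
          apply Subtype.ext; linarith
        rw [this]
      · exact hKb _ _ _ h4.1 h4.2
  have hQq' : IsQuotientMap (⟨Q, hQc⟩ : C(_, _)) := hQq
  let F := hQq'.lift ⟨K, hK⟩ (fun a b h => hfib a b h)
  have hF : ∀ p, F (Q p) = K p := by
    intro p
    exact DFunLike.congr_fun (hQq'.lift_comp ⟨K, hK⟩ (fun a b h => hfib a b h)) p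
  refine ⟨fun x => F (if hx : x ∈ closedBall (0 : ℝ × (Fin d → ℝ)) 1 then ⟨x, hx⟩ else
    ⟨0, by simp⟩), ?_, ?_⟩
  · rw [continuousOn_iff_continuous_domRestrict]
    refine F.continuous.congr fun x => ?_
    have : (x : ℝ × (Fin d → ℝ)) ∈ closedBall (0 : ℝ × (Fin d → ℝ)) 1 := x.2
    simp only [Set.domRestrict_apply, dif_pos this]
  · intro x hx
    rw [mem_sphere_zero_iff_norm] at hx
    have hx' : x ∈ closedBall (0 : ℝ × (Fin d → ℝ)) 1 := by simp [hx]
    simp only [dif_pos hx']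
    obtain ⟨⟨y, t⟩, hp⟩ := hQs ⟨x, hx'⟩
    have h1 := hQn (y, t)
    rw [hp] at h1
    simp only [hx] at h1
    have ht : t = 0 := Subtype.ext (by rw [Set.Icc.coe_zero]; linarith)
    subst ht
    rw [← hp, hF]
    have h2 := congrArg Subtype.val hp
    simp [Q] at h2
    have h3 : ((0:unitInterval):ℝ) ≤ 1/2 := by norm_num
    simp only [K, if_pos h3, Set.Icc.coe_zero, mul_zero, add_zero, one_smul, f1, if_pos (hun y)]
    rw [h2]


lemma la_p {V : Type*} [NormedAddCommGroup V] [NormedSpace ℝ V] [FiniteDimensional ℝ V] {n : ℕ}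
    (α : Fin n → V →ₗ[ℝ] ℝ) (β : V →ₗ[ℝ] ℝ) (hα : ∀ i, α i ≠ 0) (hβ : β ≠ 0)
    (hess : ∀ x, (∀ i, α i x = 0) → x = 0)
    (hgen : ∀ I : Finset (Fin n), (∃ x, x ≠ 0 ∧ ∀ i ∈ I, α i x = 0) →
      ∃ y, (∀ i ∈ I, α i y = 0) ∧ β y ≠ 0) :
    ∃ p : V, β p = 1 ∧ (∀ j, α j p ≠ 0) ∧
      ∀ x, x ≠ 0 → (∀ j, 0 ≤ α j x * α j p) → 0 < β x := by
  classical
  obtain ⟨κ, a, ha, hsp, hli⟩ := exists_linearIndependent' ℝ α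
  have : Finite κ := Finite.of_injective a ha
  let _ : Fintype κ := Fintype.ofFinite κ
  have htop : Submodule.span ℝ (range α) = ⊤ := by
    apply Submodule.span_eq_top_of_ne_zero
    intro z hz
    by_contra! h
    exact hz (hess z fun i => h _ ⟨i, rfl⟩)
  let b : Module.Basis κ ℝ (Module.Dual ℝ V) := Module.Basis.mk hli (by rw [hsp]; exact htop.ge)
  have hb : ∀ k, b k = α (a k) := fun k => by simp [b]
  let e : κ → V := fun k => (Module.evalEquiv ℝ V).symm (b.dualBasis k)
  have he : ∀ k k', α (a k) (e k') = if k = k' then 1 else 0 := by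
    intro k k'
    rw [← hb]
    simp only [e]
    rw [Module.apply_evalEquiv_symm_apply, Module.Basis.dualBasis_apply_self]
  let c : κ → ℝ := fun k => b.repr β k
  have hβx : ∀ x, β x = ∑ k, c k * α (a k) x := by
    intro x
    have := congrArg (fun f : Module.Dual ℝ V => f x) (b.sum_repr β)
    simp only [hb] at this
    rw [← this]
    simp [c]
  have hc : ∀ k, c k ≠ 0 := by
    intro k hk
    have h1 : e k ≠ 0 := by
      intro h
      have := he k k
      rw [h] at this
      simp at this
    have h2 : ∀ i ∈ (Finset.univ.erase k).image a, α i (e k) = 0 := by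
      intro i hi
      obtain ⟨k', hk', rfl⟩ := Finset.mem_image.1 hi
      rw [he, if_neg (by simpa using hk')]
    obtain ⟨y, hy, hy'⟩ := hgen ((Finset.univ.erase k).image a) ⟨e k, h1, h2⟩
    apply hy'
    rw [hβx]
    refine Finset.sum_eq_zero fun k' _ => ?_
    by_cases h : k' = k
    · rw [h, hk, zero_mul]
    · rw [hy (a k') (Finset.mem_image_of_mem _ (by simp [h])), mul_zero]
  obtain ⟨q1, hq1⟩ := Module.Dual.exists_forall_ne_zero_of_forall_exists (K := ℝ) (M := V) α (fun i => by
    by_contra! h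
    exact hα i (LinearMap.ext h))
  let q0 : V := ∑ k, c k • e k
  have hq0 : ∀ k, α (a k) q0 = c k := by
    intro k
    simp [q0, he]
  have hcont : ∀ j, Continuous (fun τ : ℝ => α j (q0 + τ • q1)) := by
    intro j
    simp only [map_add, map_smul]; fun_prop
  have ev1 : ∀ᶠ τ : ℝ in 𝓝[≠] 0, ∀ j, α j (q0 + τ • q1) ≠ 0 := by
    rw [Filter.eventually_all]
    intro j
    by_cases h : α j q0 = 0
    · filter_upwards [self_mem_nhdsWithin] with τ hτ
      simp only [map_add, map_smul, h, zero_add, smul_eq_mul]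
      exact mul_ne_zero hτ (hq1 j)
    · apply eventually_nhdsWithin_of_eventually_nhds
      apply (hcont j).continuousAt.eventually_ne
      simpa using h
  have ev2 : ∀ᶠ τ : ℝ in 𝓝[≠] 0, ∀ k, 0 < c k * α (a k) (q0 + τ • q1) := by
    rw [Filter.eventually_all]
    intro k
    apply eventually_nhdsWithin_of_eventually_nhds
    apply (continuous_const.mul (hcont (a k))).continuousAt.eventually_const_lt
    show 0 < c k * α (a k) (q0 + (0:ℝ) • q1)
    rw [zero_smul, add_zero, hq0]
    exact mul_self_pos.2 (hc k)
  obtain ⟨τ, h1, h2⟩ := (ev1.and ev2).exists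
  set q := q0 + τ • q1
  have hne : Nonempty κ := by
    by_contra h
    rw [not_nonempty_iff] at h
    apply hβ
    ext x; rw [hβx]; simp
  have hβq : 0 < β q := by
    rw [hβx]
    exact Finset.sum_pos (fun k _ => h2 k) Finset.univ_nonempty
  have hinj : ∀ x, (∀ k, α (a k) x = 0) → x = 0 := by
    intro x hx
    have : ∀ f : Module.Dual ℝ V, f x = 0 := by
      intro f
      have := congrArg (fun f : Module.Dual ℝ V => f x) (b.sum_repr f)
      simp only [hb] at this
      rw [← this]
      simp [hx]
    exact hess x fun i => this _
  refine ⟨(β q)⁻¹ • q, by simp [hβq.ne'], fun j => by simp [h1 j, hβq.ne'], ?_⟩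
  intro x hx hj
  have hk0 : ∀ k, 0 ≤ c k * α (a k) x := by
    intro k
    have h3 := hj (a k)
    rw [map_smul, smul_eq_mul] at h3
    have h4 : 0 ≤ α (a k) x * α (a k) q := by
      have : α (a k) x * α (a k) q = β q * (α (a k) x * ((β q)⁻¹ * α (a k) q)) := by field_simp
      rw [this]; positivity
    have h5 : 0 ≤ (c k * α (a k) x) * (c k * α (a k) q) := by
      have : (c k * α (a k) x) * (c k * α (a k) q) = (c k)^2 * (α (a k) x * α (a k) q) := by ring
      rw [this]; positivity
    exact nonneg_of_mul_nonneg_left h5 (h2 k)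
  rw [hβx]
  obtain ⟨k, hk⟩ : ∃ k, α (a k) x ≠ 0 := by
    by_contra! h
    exact hx (hinj x h)
  refine Finset.sum_pos' (fun k _ => hk0 k) ⟨k, Finset.mem_univ _, ?_⟩
  exact lt_of_le_of_ne (hk0 k) (mul_ne_zero (hc k) hk).symm

lemma la_local {V : Type*} [AddCommGroup V] [Module ℝ V] {n : ℕ}
    (α : Fin n → V →ₗ[ℝ] ℝ) (β : V →ₗ[ℝ] ℝ)
    (hgen : ∀ I : Finset (Fin n), (∃ x, x ≠ 0 ∧ ∀ i ∈ I, α i x = 0) →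
      ∃ y, (∀ i ∈ I, α i y = 0) ∧ β y ≠ 0)
    (p : V) (hp1 : β p = 1) (hp : ∀ j, α j p ≠ 0)
    (I : Finset (Fin (n+1)))
    (hI : ∃ x, x ≠ 0 ∧ ∀ i ∈ I, (Fin.snoc α β : Fin (n+1) → V →ₗ[ℝ] ℝ) i x = 0) :
    ∃ x, (∀ j, (∀ z, (∀ i ∈ I, (Fin.snoc α β : Fin (n+1) → V →ₗ[ℝ] ℝ) i z = 0) → α j z = 0) →
      0 < α j p * α j x) ∧
      ((∀ z, (∀ i ∈ I, (Fin.snoc α β : Fin (n+1) → V →ₗ[ℝ] ℝ) i z = 0) → β z = 0) → β x < 0) := by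
  classical
  by_cases hX : ∀ z, (∀ i ∈ I, (Fin.snoc α β : Fin (n+1) → V →ₗ[ℝ] ℝ) i z = 0) → β z = 0
  swap
  · exact ⟨p, fun j _ => mul_self_pos.2 (hp j), fun h => absurd h hX⟩
  obtain ⟨x0, hx0, hx0I⟩ := hI
  let J : Finset (Fin n) := Finset.univ.filter fun i => Fin.castSucc i ∈ I
  have hJ : ∀ z, (∀ i ∈ I, (Fin.snoc α β : Fin (n+1) → V →ₗ[ℝ] ℝ) i z = 0) → ∀ i ∈ J, α i z = 0 := by
    intro z hz i hi
    have := hz i.castSucc (by simpa [J] using hi)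
    simpa using this
  have hJ' : ∀ z, (∀ i ∈ J, α i z = 0) → β z = 0 →
      ∀ i ∈ I, (Fin.snoc α β : Fin (n+1) → V →ₗ[ℝ] ℝ) i z = 0 := by
    intro z hz hz' i
    refine Fin.lastCases ?_ ?_ i
    · intro _; simpa using hz'
    · intro i hi; simpa using hz i (by simpa [J] using hi)
  obtain ⟨y, hy, hyβ⟩ := hgen J ⟨x0, hx0, hJ x0 hx0I⟩
  have key : ∀ j, (∀ z, (∀ i ∈ I, (Fin.snoc α β : Fin (n+1) → V →ₗ[ℝ] ℝ) i z = 0) → α j z = 0) →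
      α j y = 0 := by
    intro j hj
    obtain ⟨w, hw, hwβ⟩ := hgen (insert j J) ⟨x0, hx0, by
      intro i hi
      rcases Finset.mem_insert.1 hi with rfl | hi
      · exact hj x0 hx0I
      · exact hJ x0 hx0I i hi⟩
    -- y - (β y / β w) w lies in X
    have h1 : α j (y - (β y / β w) • w) = 0 := by
      apply hj
      apply hJ'
      · intro i hi
        simp [hy i hi, hw i (Finset.mem_insert_of_mem hi)]
      · simp [hwβ]
    simpa [hw j (Finset.mem_insert_self _ _)] using h1
  refine ⟨p - (2 / β y) • y, ?_, fun _ => ?_⟩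
  · intro j hj
    simp [key j hj, mul_self_pos.2 (hp j)]
  · simp [hp1, hyβ]

lemma log_const {X : Type*} [TopologicalSpace X] {S : Set X} (hS : IsPreconnected S)
    (f g : X → ℂ) (hf : ContinuousOn f S) (hg : ContinuousOn g S)
    (h : ∀ x ∈ S, Complex.exp (f x) = Complex.exp (g x)) :
    ∃ m : ℤ, ∀ x ∈ S, f x = g x + m * (2 * Real.pi * Complex.I) := by
  have hd : IsDiscrete (range ((↑) : ℤ → ℝ)) := by
    rw [isDiscrete_iff_discreteTopology]
    exact Int.isClosedEmbedding_coe_real.toIsEmbedding.toHomeomorph.discreteTopology_iff.1 inferInstance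
  have key : ∀ x ∈ S, ∃ m : ℤ, f x = g x + m * (2 * Real.pi * Complex.I) := fun x hx =>
    Complex.exp_eq_exp_iff_exists_int.1 (h x hx)
  have hpi := Real.pi_pos
  let F : X → ℝ := fun x => (f x - g x).im / (2 * Real.pi)
  have hF : ∀ x ∈ S, ∀ m : ℤ, f x = g x + m * (2 * Real.pi * Complex.I) → F x = m := by
    intro x hx m hm
    simp only [F, hm]
    rw [add_sub_cancel_left]
    have : ((m:ℂ) * (2 * Real.pi * Complex.I)).im = m * (2 * Real.pi) := by simp
    rw [this]; field_simp
  have hFc : ContinuousOn F S :=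
    (Complex.continuous_im.comp_continuousOn (hf.sub hg)).div_const _
  obtain ⟨y, ⟨m, rfl⟩, hy⟩ := hS.eqOn_const_of_mapsTo hd hFc (fun x hx => by
    obtain ⟨m, hm⟩ := key x hx
    exact ⟨m, (hF x hx m hm).symm⟩) ⟨_, ⟨0, rfl⟩⟩
  refine ⟨m, fun x hx => ?_⟩
  obtain ⟨m', hm'⟩ := key x hx
  have h1 := hF x hx m' hm'
  have h2 : F x = m := hy hx
  have : m' = m := by exact_mod_cast h1.symm.trans h2
  rw [← this]; exact hm'

lemma log_lift {E : Type*} [NormedAddCommGroup E] [NormedSpace ℝ E]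
    (f : E → ℂ) (hf : ContinuousOn f (closedBall 0 1)) (h0 : ∀ x ∈ closedBall (0:E) 1, f x ≠ 0) :
    ∃ g : E → ℂ, ContinuousOn g (closedBall 0 1) ∧ ∀ x ∈ closedBall (0:E) 1, Complex.exp (g x) = f x := by
  let pr : E → E := fun x => (max 1 ‖x‖)⁻¹ • x
  have hprc : Continuous pr := by
    refine Continuous.smul (Continuous.inv₀ (by fun_prop) fun x => ?_) continuous_id
    positivity
  have hprn : ∀ x, pr x ∈ closedBall (0:E) 1 := by
    intro x
    simp only [pr, mem_closedBall_zero_iff, norm_smul, norm_inv]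
    rw [Real.norm_of_nonneg (by positivity), inv_mul_le_iff₀ (by positivity)]
    simp
  have hpr : ∀ x ∈ closedBall (0:E) 1, pr x = x := by
    intro x hx
    simp [pr, max_eq_left (mem_closedBall_zero_iff.1 hx)]
  have hsc : IsSimplyConnected (univ : Set E) := by
    have : ContractibleSpace (univ : Set E) := convex_univ.contractibleSpace univ_nonempty
    have : SimplyConnectedSpace (univ : Set E) := inferInstance
    exact this
  obtain ⟨g, hg, hgf⟩ := Complex.exists_continuousOn_eqOn_exp_comp hsc isOpen_univ
    (g := fun x => f (pr x)) (hf.comp_continuous hprc hprn).continuousOn (by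
      rintro ⟨x, -, hx⟩
      exact h0 _ (hprn x) hx)
  refine ⟨g, hg.mono (subset_univ _), fun x hx => ?_⟩
  have := hgf (mem_univ x)
  simp only [Function.comp] at this
  rw [this, hpr x hx]

def cx {V : Type*} [AddCommGroup V] [Module ℝ V] (f : V →ₗ[ℝ] ℝ) (x y : V) : ℂ := ⟨f x, f y⟩

lemma cx_cont {V X : Type*} [NormedAddCommGroup V] [NormedSpace ℝ V] [FiniteDimensional ℝ V]
    [TopologicalSpace X] (f : V →ₗ[ℝ] ℝ) {S : Set X} {x y : X → V} (hx : ContinuousOn x S)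
    (hy : ContinuousOn y S) : ContinuousOn (fun w => cx f (x w) (y w)) S := by
  have hf : Continuous f := f.continuous_of_finiteDimensional
  have : (fun w => cx f (x w) (y w)) = fun w => ((f (x w) : ℝ) : ℂ) + (f (y w) : ℝ) * Complex.I := by
    funext w; apply Complex.ext <;> simp [cx]
  rw [this]
  have h1 := Complex.continuous_ofReal.comp_continuousOn (hf.comp_continuousOn hx)
  have h2 := Complex.continuous_ofReal.comp_continuousOn (hf.comp_continuousOn hy)
  exact h1.add (h2.mul continuousOn_const)

lemma core1 {V : Type*} [NormedAddCommGroup V] [NormedSpace ℝ V] [FiniteDimensional ℝ V]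
    {n d : ℕ} [Nonempty (Fin n)] (hd : 0 < d) (α : Fin n → V →ₗ[ℝ] ℝ) (β : V →ₗ[ℝ] ℝ) (p : V)
    (hβp : β p = 1)
    (L : (Fin d → ℝ) →ₗ[ℝ] V) (P : V →ₗ[ℝ] (Fin d → ℝ)) (hβL : ∀ v, β (L v) = 0)
    (hPL : ∀ v, P (L v) = v) (hPp : P p = 0) (hLP : ∀ x, x = β x • p + L (P x))
    (R : ℝ) (hR : 0 < R) (x y : ℝ × (Fin d → ℝ) → V) (G : Fin n → ℝ × (Fin d → ℝ) → ℂ)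
    (hG : ∀ j, ContinuousOn (G j) (sphere 0 1))
    (hGe : ∀ j, ∀ w ∈ sphere (0 : ℝ × (Fin d → ℝ)) 1,
      Complex.exp (G j w) = cx (α j) (x w) (y w) / cx β (x w) (y w))
    (htop : ∀ w ∈ sphere (0 : ℝ × (Fin d → ℝ)) 1, 0 ≤ w.1 → x w = R • L w.2 ∧ y w = p)
    (hG0 : ∀ j, (G j (1, 0)).im = 0)
    (hbot : ∀ w ∈ sphere (0 : ℝ × (Fin d → ℝ)) 1, w.1 ≤ 0 → ∃ j, 0 < (G j w).im)
    (X Y : ℝ × (Fin d → ℝ) → V) (hX : ContinuousOn X (closedBall 0 1))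
    (hY : ContinuousOn Y (closedBall 0 1)) (hXx : EqOn X x (sphere 0 1)) (hYy : EqOn Y y (sphere 0 1))
    (hα0 : ∀ w ∈ closedBall (0 : ℝ × (Fin d → ℝ)) 1, ∀ j, cx (α j) (X w) (Y w) ≠ 0)
    (hβ0 : ∀ w ∈ closedBall (0 : ℝ × (Fin d → ℝ)) 1, cx β (X w) (Y w) ≠ 0) : False := by
  classical
  have hSD : sphere (0 : ℝ × (Fin d → ℝ)) 1 ⊆ closedBall 0 1 := sphere_subset_closedBall
  have hrank : 1 < Module.rank ℝ (ℝ × (Fin d → ℝ)) := by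
    rw [← Module.finrank_eq_rank]
    have : 1 < Module.finrank ℝ (ℝ × (Fin d → ℝ)) := by simp; omega
    exact_mod_cast this
  have hSc : IsPreconnected (sphere (0 : ℝ × (Fin d → ℝ)) 1) := isPreconnected_sphere hrank _ _
  have hg : ∀ j, ∃ g : ℝ × (Fin d → ℝ) → ℂ, ContinuousOn g (closedBall 0 1) ∧
      (∀ w ∈ closedBall (0 : ℝ × (Fin d → ℝ)) 1,
        Complex.exp (g w) = cx (α j) (X w) (Y w) / cx β (X w) (Y w)) ∧
      EqOn g (G j) (sphere 0 1) := by
    intro j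
    obtain ⟨g, hg, hge⟩ := log_lift (fun w => cx (α j) (X w) (Y w) / cx β (X w) (Y w))
      ((cx_cont _ hX hY).div (cx_cont _ hX hY) hβ0) (fun w hw => div_ne_zero (hα0 w hw j) (hβ0 w hw))
    obtain ⟨m, hm⟩ := log_const hSc g (G j) (hg.mono hSD) (hG j) (fun w hw => by
      rw [hge w (hSD hw), hGe j w hw, hXx hw, hYy hw])
    refine ⟨fun w => g w - m * (2 * Real.pi * Complex.I), hg.sub continuousOn_const, ?_, ?_⟩
    · intro w hw
      rw [← hge w hw, Complex.exp_eq_exp_iff_exists_int]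
      exact ⟨-m, by push_cast; ring⟩
    · intro w hw
      simp only [hm w hw]; ring
  choose g hgc hge hgG using hg
  have hGim : ∀ j, ContinuousOn (fun w => (G j w).im) (sphere 0 1) := fun j =>
    Complex.continuous_im.comp_continuousOn (hG j)
  have hne : (Finset.univ : Finset (Fin n)).Nonempty := Finset.univ_nonempty
  let B : Set (ℝ × (Fin d → ℝ)) := sphere 0 1 ∩ {w | w.1 ≤ 0}
  have hB : IsCompact B := (isCompact_sphere _ _).inter_right (isClosed_le continuous_fst continuous_const)
  obtain ⟨δ', hδ', hδB⟩ := hB.exists_forall_le' (f := fun w => Finset.univ.sup' hne fun j => (G j w).im)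
    (a := 0) (ContinuousOn.finset_sup'_apply hne fun j _ => (hGim j).mono inter_subset_left) (by
      rintro w ⟨hw, hw'⟩
      obtain ⟨j, hj⟩ := hbot w hw hw'
      exact hj.trans_le (Finset.le_sup' (fun j => (G j w).im) (Finset.mem_univ j)))
  have hpi := Real.pi_pos
  let δ := min (δ' / 2) (Real.pi / 2)
  have hδ0 : 0 < δ := by simp only [δ]; positivity
  have hδ1 : δ < δ' := (min_le_left _ _).trans_lt (by linarith)
  have hδ2 : δ < Real.pi := (min_le_right _ _).trans_lt (by linarith)
  let Φ : ℝ × (Fin d → ℝ) → ℝ × (Fin d → ℝ) := fun w =>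
    (δ - Finset.univ.sup' hne fun j => (g j w).im, β (Y w) • P (X w) - β (X w) • P (Y w))
  have hβc : Continuous β := β.continuous_of_finiteDimensional
  have hPc : Continuous P := P.continuous_of_finiteDimensional
  refine br_main Φ ?_ ?_ ?_
  · refine ContinuousOn.prodMk (continuousOn_const.sub ?_) ?_
    · exact ContinuousOn.finset_sup'_apply hne fun j _ => Complex.continuous_im.comp_continuousOn (hgc j)
    · exact ((hβc.comp_continuousOn hY).smul (hPc.comp_continuousOn hX)).sub
        ((hβc.comp_continuousOn hX).smul (hPc.comp_continuousOn hY))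
  · intro w hw h
    simp only [Φ, Prod.mk_eq_zero] at h
    obtain ⟨h1, h2⟩ := h
    obtain ⟨j, -, hj⟩ := Finset.exists_mem_eq_sup' hne fun j => (g j w).im
    rw [hj] at h1
    have h3 : β (Y w) • X w - β (X w) • Y w = 0 := by
      rw [hLP (β (Y w) • X w - β (X w) • Y w)]
      have : P (β (Y w) • X w - β (X w) • Y w) = 0 := by simpa using h2
      rw [this]
      simp [mul_comm]
    have h4 : β (Y w) * α j (X w) - β (X w) * α j (Y w) = 0 := by
      have := congrArg (α j) h3
      simpa using this
    have h5 : (cx (α j) (X w) (Y w) / cx β (X w) (Y w)).im = 0 := by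
      rw [Complex.div_im]
      simp only [cx]
      rw [div_sub_div_same, div_eq_zero_iff]; left; linarith
    rw [← hge j w hw, Complex.exp_im] at h5
    have h6 : (g j w).im = δ := by linarith
    rw [h6] at h5
    have := Real.sin_pos_of_pos_of_lt_pi hδ0 hδ2
    have := Real.exp_pos (g j w).re
    exact absurd h5 (by positivity)
  · rintro ⟨h, v⟩ hw l hl heq
    have hw' : ((h, v) : ℝ × (Fin d → ℝ)) ∈ sphere (0 : ℝ × (Fin d → ℝ)) 1 := by simpa using hw
    have hgs : (fun j => (g j (h, v)).im) = fun j => (G j (h, v)).im := by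
      funext j; rw [hgG j hw']
    simp only [Φ, hgs, hXx hw', hYy hw', Prod.smul_mk, Prod.neg_mk, Prod.mk.injEq, smul_eq_mul] at heq
    obtain ⟨e1, e2⟩ := heq
    rcases le_total h 0 with hh | hh
    · have := hδB _ ⟨hw', hh⟩
      nlinarith
    · obtain ⟨hx1, hy1⟩ := htop _ hw' hh
      simp only at hx1 hy1
      rw [hx1, hy1] at e2
      simp only [map_smul, hβp, hβL, hPL, hPp, one_smul, smul_zero, sub_zero] at e2
      have hv : (R + l) • v = 0 := by rw [add_smul, e2]; simp
      have hv : v = 0 := (smul_eq_zero.1 hv).resolve_left (by positivity)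
      subst hv
      have h1 : h = 1 := by
        rw [Prod.norm_def] at hw; simp at hw
        rwa [abs_of_nonneg hh] at hw
      subst h1
      simp only [hG0] at e1
      rw [Finset.sup'_const] at e1
      linarith

lemma coreY {V : Type*} [NormedAddCommGroup V] [NormedSpace ℝ V] [FiniteDimensional ℝ V]
    {n d : ℕ} (α : Fin n → V →ₗ[ℝ] ℝ) (β : V →ₗ[ℝ] ℝ)
    (hgen : ∀ I : Finset (Fin n), (∃ x, x ≠ 0 ∧ ∀ i ∈ I, α i x = 0) →
      ∃ y, (∀ i ∈ I, α i y = 0) ∧ β y ≠ 0)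
    (L : (Fin d → ℝ) →ₗ[ℝ] V) (hL : Function.Injective L) :
    ∃ Y : (Fin d → ℝ) → V, Continuous Y ∧ ∀ v, 1 / 2 ≤ ‖v‖ →
      β (Y v) = -2 ∧ ∀ j, α j (L v) = 0 → α j (Y v) = 0 := by
  classical
  let t : (Fin d → ℝ) → Set V := fun v =>
    {y : V | 1 / 2 ≤ ‖v‖ → β y = -2 ∧ ∀ j, α j (L v) = 0 → α j y = 0}
  suffices hs : (∀ v, Convex ℝ (t v)) ∧ ∀ v0, ∃ c : V, ∀ᶠ v in 𝓝 v0, c ∈ t v by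
    obtain ⟨g, hg⟩ := exists_continuous_forall_mem_convex_of_local_const hs.1 hs.2
    exact ⟨g, g.continuous, hg⟩
  constructor
  · intro v y hy z hz a b ha hb hab hv
    obtain ⟨h1, h2⟩ := hy hv
    obtain ⟨h3, h4⟩ := hz hv
    refine ⟨?_, fun j hj => ?_⟩
    · rw [map_add, map_smul, map_smul, h1, h3, smul_eq_mul, smul_eq_mul]; linear_combination (-2) * hab
    · rw [map_add, map_smul, map_smul, h2 j hj, h4 j hj]; simp
  · intro v0
    by_cases hv0 : v0 = 0
    · refine ⟨0, ?_⟩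
      have : ∀ᶠ v : Fin d → ℝ in 𝓝 v0, ‖v‖ < 1 / 2 := by
        apply continuous_norm.continuousAt.eventually_lt_const
        simp [hv0]
      filter_upwards [this] with v hv hv'
      linarith
    · let I : Finset (Fin n) := Finset.univ.filter fun j => α j (L v0) = 0
      obtain ⟨y, hy, hyβ⟩ := hgen I ⟨L v0, fun h => hv0 (hL (by rw [h, map_zero])), by simp [I]⟩
      refine ⟨(-2 / β y) • y, ?_⟩
      have : ∀ᶠ v : Fin d → ℝ in 𝓝 v0, ∀ j, α j (L v0) ≠ 0 → α j (L v) ≠ 0 := by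
        rw [Filter.eventually_all]
        intro j
        by_cases h : α j (L v0) = 0
        · exact Filter.Eventually.of_forall fun v hv => absurd h hv
        · have hc : Continuous (fun v => α j (L v)) := (α j ∘ₗ L).continuous_of_finiteDimensional
          filter_upwards [hc.continuousAt.eventually_ne h] with v hv _ using hv
      filter_upwards [this] with v hv _
      refine ⟨by simp [hyβ], fun j hj => ?_⟩
      have : α j (L v0) = 0 := by
        by_contra h
        exact hv j h hj
      simp [hy j (by simp [I, this])]

lemma ev1 {X : Type*} [TopologicalSpace X] {K : Set X} (hK : IsCompact K) (f g : X → ℝ)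
    (hf : ContinuousOn f K) (hg : ContinuousOn g K) (h : ∀ v ∈ K, f v = 0 → 0 < g v) :
    ∀ᶠ R : ℝ in Filter.atTop, ∀ v ∈ K, R * |f v| ≤ 1 → 0 < g v := by
  obtain ⟨η, hη, hK'⟩ := hK.exists_forall_le' (f := fun v => max |f v| (g v)) (a := 0)
    (hf.abs.sup hg) (by
      intro v hv
      by_cases h0 : f v = 0
      · exact lt_max_of_lt_right (h v hv h0)
      · exact lt_max_of_lt_left (abs_pos.2 h0))
  filter_upwards [Filter.eventually_gt_atTop (1 / η)] with R hR v hv hRv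
  rcases le_max_iff.1 (hK' v hv) with h1 | h1
  · exfalso
    have : 1 < R * η := by rwa [div_lt_iff₀ hη] at hR
    have hR0 : 0 < R := lt_trans (by positivity) hR
    nlinarith
  · linarith

/-- main parameters of the sphere -/
lemma coreB (g κ r t : ℝ) (hg0 : 0 ≤ g) (hg1 : g ≤ 1) (hr0 : 0 ≤ r) (hr1 : r ≤ 1)
    (hκ : κ = max 0 (2 * r - 1)) (ht : t = 4 * g * (1 - g) - g * (1 - r))
    (hz : g = 0 ∨ r = 1 ∨ g = 1) :
    |t| ≤ 1 ∧ ((⟨t, 1 - 2 * g * κ⟩ : ℂ) * ⟨1, 4⟩ ∈ Complex.slitPlane) ∧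
    (g = 1 → ((⟨t, 1 - 2 * g * κ⟩ : ℂ) * ⟨1, 4⟩).im < 0) ∧ (r = 1 → 0 ≤ t ∧ t ≤ 1) := by
  have hA : g = 1 → ((⟨t, 1 - 2 * g * κ⟩ : ℂ) * ⟨1, 4⟩).im < 0 := by
    intro h
    subst h
    simp only [Complex.mul_im]
    rw [ht, hκ]
    rcases le_total 0 (2 * r - 1) with h | h
    · rw [max_eq_right h]; linarith
    · rw [max_eq_left h]; linarith
  have hB : r = 1 → 0 ≤ t ∧ t ≤ 1 := by
    rintro rfl
    rw [ht]
    constructor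
    · nlinarith
    · nlinarith [sq_nonneg (2 * g - 1)]
  refine ⟨?_, ?_, hA, hB⟩
  · rcases hz with h | h | h
    · rw [ht, h]; simp
    · rw [abs_le]; have := hB h; constructor <;> linarith
    · rw [ht, h, abs_le]; constructor <;> linarith
  · rcases hz with h | h | h
    · rw [Complex.mem_slitPlane_iff]; right
      rw [ht, h]; simp
    · rw [Complex.mem_slitPlane_iff]
      subst h
      have hk : κ = 1 := by rw [hκ]; norm_num
      rw [hk]
      by_cases him : ((⟨t, 1 - 2 * g * 1⟩ : ℂ) * ⟨1, 4⟩).im = 0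
      · left
        simp only [Complex.mul_im, Complex.mul_re] at him ⊢
        have h1 := hB rfl
        have h2 : t = (2 * g - 1) / 4 := by linarith
        have h3 : t ≠ 0 := by
          intro h0
          have h4 : g = 1 / 2 := by linarith
          rw [ht, h4] at h0; norm_num at h0
        have h4 : 0 < t := lt_of_le_of_ne h1.1 (Ne.symm h3)
        linarith
      · right; exact him
    · exact Complex.mem_slitPlane_iff.2 (Or.inr (hA h).ne)

lemma arg_le (b : ℂ) (hb : b ≠ 0) (hre : 0 ≤ b.re) :
    (b * ⟨1, 4⟩).arg ≤ (Complex.I * ⟨1, 4⟩).arg := by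
  have hpi := Real.pi_pos
  set c : ℂ := ⟨1, 4⟩
  have hc : c ≠ 0 := by intro h; have := congrArg Complex.re h; simp [c] at this
  have hc0 : 0 ≤ c.arg := Complex.arg_nonneg_iff.2 (by simp [c])
  have hc1 : |c.arg| < Real.pi / 2 := Complex.abs_arg_lt_pi_div_two_iff.2 (Or.inl (by simp [c]))
  have hb1 := abs_le.1 (Complex.abs_arg_le_pi_div_two_iff.2 hre)
  have hc2 := abs_lt.1 hc1
  rw [(Complex.arg_mul_eq_add_arg_iff hb hc).2 ⟨by linarith, by linarith⟩,
    (Complex.arg_mul_eq_add_arg_iff Complex.I_ne_zero hc).2 (by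
      rw [Complex.arg_I]; constructor <;> linarith), Complex.arg_I]
  linarith

lemma core2 {V : Type*} [NormedAddCommGroup V] [NormedSpace ℝ V] [FiniteDimensional ℝ V]
    {n d : ℕ} [Nonempty (Fin n)] (hd : 0 < d) (α : Fin n → V →ₗ[ℝ] ℝ) (β : V →ₗ[ℝ] ℝ) (p : V)
    (hαp : ∀ j, α j p = 1) (hβp : β p = 1)
    (hgen : ∀ I : Finset (Fin n), (∃ x, x ≠ 0 ∧ ∀ i ∈ I, α i x = 0) →
      ∃ y, (∀ i ∈ I, α i y = 0) ∧ β y ≠ 0)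
    (hkey : ∀ w, w ≠ 0 → β w = 0 → ∃ j, α j w < 0)
    (L : (Fin d → ℝ) →ₗ[ℝ] V) (hβL : ∀ v, β (L v) = 0) (hL : Function.Injective L) :
    ∃ (R : ℝ) (x y : ℝ × (Fin d → ℝ) → V) (G : Fin n → ℝ × (Fin d → ℝ) → ℂ), 0 < R ∧
    Continuous x ∧ Continuous y ∧
    (∀ w ∈ sphere (0 : ℝ × (Fin d → ℝ)) 1, ∀ j, cx (α j) (x w) (y w) ≠ 0) ∧
    (∀ w ∈ sphere (0 : ℝ × (Fin d → ℝ)) 1, cx β (x w) (y w) ≠ 0) ∧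
    (∀ j, ContinuousOn (G j) (sphere 0 1)) ∧
    (∀ j, ∀ w ∈ sphere (0 : ℝ × (Fin d → ℝ)) 1,
      Complex.exp (G j w) = cx (α j) (x w) (y w) / cx β (x w) (y w)) ∧
    (∀ w ∈ sphere (0 : ℝ × (Fin d → ℝ)) 1, 0 ≤ w.1 → x w = R • L w.2 ∧ y w = p) ∧
    (∀ j, (G j (1, 0)).im = 0) ∧
    (∀ w ∈ sphere (0 : ℝ × (Fin d → ℝ)) 1, w.1 ≤ 0 → ∃ j, 0 < (G j w).im) := by
  classical
  obtain ⟨Y, hYc, hY⟩ := coreY α β hgen L hL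
  have hLc : Continuous L := L.continuous_of_finiteDimensional
  have hαL : ∀ j, Continuous fun v => α j (L v) := fun j => (α j ∘ₗ L).continuous_of_finiteDimensional
  have hαc : ∀ j, Continuous (α j) := fun j => (α j).continuous_of_finiteDimensional
  let A : Set (Fin d → ℝ) := closedBall 0 1 ∩ {v | 1 / 2 ≤ ‖v‖}
  have hA : IsCompact A := (isCompact_closedBall _ _).inter_right (isClosed_le continuous_const continuous_norm)
  have e1 : ∀ᶠ R : ℝ in Filter.atTop, ∀ j, ∀ v ∈ A, R * |α j (L v)| ≤ 1 → 0 < 1 + α j (Y v) := by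
    rw [Filter.eventually_all]
    intro j
    refine ev1 hA _ _ (hαL j).continuousOn (continuous_const.add ((hαc j).comp hYc)).continuousOn ?_
    intro v hv h0
    rw [(hY v hv.2).2 j h0]; norm_num
  have hne : (Finset.univ : Finset (Fin n)).Nonempty := Finset.univ_nonempty
  have hneg : ∀ v, v ≠ 0 → ∃ j, α j (L v) < 0 := fun v hv =>
    hkey (L v) (fun h => hv (hL (by rw [h, map_zero]))) (hβL v)
  have e2 : ∀ᶠ R : ℝ in Filter.atTop, ∀ v : Fin d → ℝ, ‖v‖ = 1 → ∃ j, R * α j (L v) < -1 := by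
    obtain ⟨c, hc, hcS⟩ := (isCompact_sphere (0 : Fin d → ℝ) 1).exists_forall_le'
      (f := fun v => Finset.univ.sup' hne fun j => -α j (L v)) (a := 0)
      (ContinuousOn.finset_sup'_apply hne fun j _ => (hαL j).neg.continuousOn) (by
        intro v hv
        obtain ⟨j, hj⟩ := hneg v (by rintro rfl; simp at hv)
        exact (neg_pos.2 hj).trans_le (Finset.le_sup' (fun j => -α j (L v)) (Finset.mem_univ j)))
    filter_upwards [Filter.eventually_gt_atTop (1 / c)] with R hR v hv
    obtain ⟨j, -, hj⟩ := Finset.exists_mem_eq_sup' hne fun j => -α j (L v)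
    have h1 := hcS v (by simpa using hv)
    rw [hj] at h1
    refine ⟨j, ?_⟩
    have h2 : 1 < R * c := by rwa [div_lt_iff₀ hc] at hR
    have hR0 : 0 < R := lt_trans (by positivity) hR
    nlinarith
  obtain ⟨R, hR1, hR2, hR⟩ := (e1.and (e2.and (Filter.eventually_gt_atTop (0:ℝ)))).exists
  let g : ℝ × (Fin d → ℝ) → ℝ := fun w => max (-w.1) 0
  let κ : ℝ × (Fin d → ℝ) → ℝ := fun w => max 0 (2 * ‖w.2‖ - 1)
  let t : ℝ × (Fin d → ℝ) → ℝ := fun w => 4 * g w * (1 - g w) - g w * (1 - ‖w.2‖)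
  have hgc : Continuous g := by fun_prop
  have hκc : Continuous κ := by fun_prop
  have htc : Continuous t := by fun_prop
  let x : ℝ × (Fin d → ℝ) → V := fun w => R • L w.2 + t w • p
  let y : ℝ × (Fin d → ℝ) → V := fun w => p + (g w * κ w) • Y w.2
  have hxc : Continuous x := by fun_prop
  have hyc : Continuous y := by fun_prop
  have hS : ∀ w ∈ sphere (0 : ℝ × (Fin d → ℝ)) 1, 0 ≤ g w ∧ g w ≤ 1 ∧ 0 ≤ ‖w.2‖ ∧ ‖w.2‖ ≤ 1 ∧
      (g w = 0 ∨ ‖w.2‖ = 1 ∨ g w = 1) := by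
    intro w hw
    rw [mem_sphere_zero_iff_norm, Prod.norm_def] at hw
    have h1 : ‖w.1‖ ≤ 1 := hw ▸ le_max_left _ _
    have h2 : ‖w.2‖ ≤ 1 := hw ▸ le_max_right _ _
    rw [Real.norm_eq_abs, abs_le] at h1
    refine ⟨le_max_right _ _, max_le (by linarith) zero_le_one, norm_nonneg _, h2, ?_⟩
    rcases le_total 0 w.1 with h0 | h0
    · left; exact max_eq_right (by linarith)
    · right
      rcases max_choice ‖w.1‖ ‖w.2‖ with h | h
      · right
        rw [h, Real.norm_eq_abs, abs_of_nonpos h0] at hw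
        simp only [g]; rw [hw]; norm_num
      · left; rw [← h]; exact hw
  have hcB := fun w hw => coreB (g w) (κ w) ‖w.2‖ (t w) (hS w hw).1 (hS w hw).2.1 (hS w hw).2.2.1
    (hS w hw).2.2.2.1 rfl rfl (hS w hw).2.2.2.2
  have hαx : ∀ j w, cx (α j) (x w) (y w) =
      ⟨R * α j (L w.2) + t w, 1 + g w * κ w * α j (Y w.2)⟩ := by
    intro j w
    apply Complex.ext <;> simp [cx, x, y, hαp]
  have hβx : ∀ w, cx β (x w) (y w) = ⟨t w, 1 - 2 * g w * κ w⟩ := by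
    intro w
    apply Complex.ext
    · simp [cx, x, hβp, hβL]
    · simp only [cx, y, map_add, hβp, map_smul, smul_eq_mul]
      rcases le_total ‖w.2‖ (1/2) with h | h
      · have : κ w = 0 := max_eq_left (by linarith)
        rw [this]; ring
      · rw [(hY _ h).1]; ring
  have hαs : ∀ w ∈ sphere (0 : ℝ × (Fin d → ℝ)) 1, ∀ j,
      -Complex.I * cx (α j) (x w) (y w) ∈ Complex.slitPlane := by
    intro w hw j
    rw [hαx, Complex.mem_slitPlane_iff]
    simp only [neg_mul, Complex.neg_re, Complex.neg_im, Complex.I_mul_re, Complex.I_mul_im, neg_neg]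
    by_cases h : R * α j (L w.2) + t w = 0
    · left
      obtain ⟨hg0, hg1, hr0, hr1, -⟩ := hS w hw
      have ht := (hcB w hw).1
      rcases le_total ‖w.2‖ (1/2) with h1 | h1
      · have : κ w = 0 := max_eq_left (by linarith)
        rw [this]; norm_num
      · have hk0 : 0 ≤ κ w := le_max_left _ _
        have hk1 : κ w ≤ 1 := max_le zero_le_one (by linarith)
        have h2 := hR1 j w.2 ⟨by simpa using hr1, h1⟩ (by
          rw [← abs_of_pos hR, ← abs_mul, show R * α j (L w.2) = - t w by linarith, abs_neg]
          exact ht)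
        have h3 : 0 ≤ g w * κ w := mul_nonneg hg0 hk0
        have h4 : g w * κ w ≤ 1 := mul_le_one₀ hg1 hk0 hk1
        rcases le_total 0 (α j (Y w.2)) with h5 | h5
        · have := mul_nonneg h3 h5
          linarith
        · have := mul_nonneg (sub_nonneg.2 h4) (neg_nonneg.2 h5)
          nlinarith
    · right
      exact neg_ne_zero.2 h
  have hβs : ∀ w ∈ sphere (0 : ℝ × (Fin d → ℝ)) 1,
      cx β (x w) (y w) * ⟨1, 4⟩ ∈ Complex.slitPlane := by
    intro w hw
    rw [hβx]
    exact (hcB w hw).2.1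
  have hc0 : (⟨1, 4⟩ : ℂ) ≠ 0 := by intro h; have := congrArg Complex.re h; simp at this
  have hα0 : ∀ w ∈ sphere (0 : ℝ × (Fin d → ℝ)) 1, ∀ j, cx (α j) (x w) (y w) ≠ 0 := fun w hw j =>
    right_ne_zero_of_mul (Complex.slitPlane_ne_zero (hαs w hw j))
  have hβ0 : ∀ w ∈ sphere (0 : ℝ × (Fin d → ℝ)) 1, cx β (x w) (y w) ≠ 0 := fun w hw =>
    left_ne_zero_of_mul (Complex.slitPlane_ne_zero (hβs w hw))
  let G : Fin n → ℝ × (Fin d → ℝ) → ℂ := fun j w =>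
    Complex.log (-Complex.I * cx (α j) (x w) (y w)) - Complex.log (cx β (x w) (y w) * ⟨1, 4⟩)
      + Complex.log (Complex.I * ⟨1, 4⟩)
  have hGim : ∀ j w, (G j w).im = (-Complex.I * cx (α j) (x w) (y w)).arg
      - (cx β (x w) (y w) * ⟨1, 4⟩).arg + (Complex.I * ⟨1, 4⟩).arg := by
    intro j w
    simp [G, Complex.log_im]
  refine ⟨R, x, y, G, hR, hxc, hyc, hα0, hβ0, ?_, ?_, ?_, ?_, ?_⟩
  · intro j
    refine ((ContinuousOn.clog (continuousOn_const.mul (cx_cont _ hxc.continuousOn hyc.continuousOn))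
      (fun w hw => hαs w hw j)).sub (ContinuousOn.clog ((cx_cont _ hxc.continuousOn hyc.continuousOn).mul
      continuousOn_const) hβs)).add continuousOn_const
  · intro j w hw
    have := hβ0 w hw
    simp only [G]
    rw [Complex.exp_add, Complex.exp_sub, Complex.exp_log (Complex.slitPlane_ne_zero (hαs w hw j)),
      Complex.exp_log (Complex.slitPlane_ne_zero (hβs w hw)),
      Complex.exp_log (mul_ne_zero Complex.I_ne_zero hc0)]
    field_simp
    rw [Complex.I_sq]; ring
  · intro w hw h
    have hg : g w = 0 := max_eq_right (by linarith)
    have ht : t w = 0 := by simp only [t, hg]; ring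
    simp [x, y, hg, ht]
  · intro j
    have hg : g (1, 0) = 0 := max_eq_right (by norm_num)
    have ht : t (1, 0) = 0 := by simp only [t, hg]; ring
    rw [hGim, hαx, hβx, hg, ht]
    have h1 : (-Complex.I * (⟨R * α j (L ((1 : ℝ), (0 : Fin d → ℝ)).2) + 0,
        1 + 0 * κ (1, 0) * α j (Y ((1 : ℝ), (0 : Fin d → ℝ)).2)⟩ : ℂ)) = 1 := by
      apply Complex.ext <;> simp
    have h2 : (⟨0, 1 - 2 * 0 * κ (1, 0)⟩ : ℂ) = Complex.I := by
      apply Complex.ext <;> simp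
    rw [h1, h2]; simp
  · intro w hw h
    obtain ⟨hg0, hg1, hr0, hr1, hz⟩ := hS w hw
    obtain ⟨hB1, hB2, hB3, hB4⟩ := hcB w hw
    by_cases hr : ‖w.2‖ = 1
    · obtain ⟨j, hj⟩ := hR2 w.2 hr
      refine ⟨j, ?_⟩
      rw [hGim]
      obtain ⟨ht0, ht1⟩ := hB4 hr
      have h1 : 0 < (-Complex.I * cx (α j) (x w) (y w)).im := by
        rw [hαx]; simp; linarith
      have h2 : 0 < (-Complex.I * cx (α j) (x w) (y w)).arg := by
        refine lt_of_le_of_ne (Complex.arg_nonneg_iff.2 h1.le) fun h0 => ?_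
        have := (Complex.arg_eq_zero_iff.1 h0.symm).2
        linarith
      have h3 := arg_le (cx β (x w) (y w)) (hβ0 w hw) (by rw [hβx]; exact ht0)
      linarith
    · have hg : g w = 1 := by
        rw [mem_sphere_zero_iff_norm, Prod.norm_def] at hw
        rcases max_choice ‖w.1‖ ‖w.2‖ with h' | h'
        · rw [h', Real.norm_eq_abs, abs_of_nonpos h] at hw
          simp only [g]; rw [hw]; norm_num
        · exact absurd (h'.symm.trans hw) hr
      have ht : t w ≤ 0 := by simp only [t, hg]; linarith
      obtain ⟨j, hj⟩ : ∃ j, α j (L w.2) ≤ 0 := by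
        by_cases hv : w.2 = 0
        · exact ⟨Classical.arbitrary _, by rw [hv]; simp⟩
        · obtain ⟨j, hj⟩ := hneg _ hv
          exact ⟨j, hj.le⟩
      refine ⟨j, ?_⟩
      rw [hGim]
      have h1 : 0 ≤ (-Complex.I * cx (α j) (x w) (y w)).arg := by
        rw [Complex.arg_nonneg_iff, hαx]; simp; nlinarith
      have h2 : (cx β (x w) (y w) * ⟨1, 4⟩).arg < 0 := by
        rw [Complex.arg_neg_iff, hβx]; exact hB3 hg
      have h3 : 0 ≤ (Complex.I * ⟨1, 4⟩ : ℂ).arg := Complex.arg_nonneg_iff.2 (by simp)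
      linarith

lemma split_LP {V : Type*} [NormedAddCommGroup V] [NormedSpace ℝ V] [FiniteDimensional ℝ V]
    {d : ℕ} (hV : Module.finrank ℝ V = d + 1) (β : V →ₗ[ℝ] ℝ) (p : V) (hβp : β p = 1) :
    ∃ (L : (Fin d → ℝ) →ₗ[ℝ] V) (P : V →ₗ[ℝ] (Fin d → ℝ)), (∀ v, β (L v) = 0) ∧
      (∀ v, P (L v) = v) ∧ P p = 0 ∧ ∀ x, x = β x • p + L (P x) := by
  have hsurj : Function.Surjective β := fun r => ⟨r • p, by simp [hβp]⟩
  have hk : Module.finrank ℝ (LinearMap.ker β) = Module.finrank ℝ (Fin d → ℝ) := by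
    have h1 := LinearMap.finrank_range_add_finrank_ker β
    rw [LinearMap.range_eq_top.2 hsurj, finrank_top, hV, Module.finrank_self] at h1
    rw [Module.finrank_fin_fun]; omega
  let e := LinearEquiv.ofFinrankEq _ _ hk
  let Q : V →ₗ[ℝ] LinearMap.ker β := LinearMap.codRestrict _ (LinearMap.id - β.smulRight p) (by
    intro x; simp [hβp])
  have hQ : ∀ x, (Q x : V) = x - β x • p := fun x => rfl
  refine ⟨(LinearMap.ker β).subtype ∘ₗ e.symm.toLinearMap, e.toLinearMap ∘ₗ Q, ?_, ?_, ?_, ?_⟩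
  · intro v; exact (e.symm v).2
  · intro v
    have : Q (e.symm v : V) = e.symm v := Subtype.ext (by
      rw [hQ, show β (e.symm v : V) = 0 from (e.symm v).2]; simp)
    simp [this]
  · have : Q p = 0 := Subtype.ext (by rw [hQ, hβp]; simp)
    simp [this]
  · intro x
    simp [hQ]

lemma cLin_cx {ℓ : ℕ} (f : Vsp ℓ →ₗ[ℝ] ℝ) (z : Fin ℓ → ℂ) :
    cLin f z = cx f (WithLp.toLp 2 (fun j => (z j).re)) (WithLp.toLp 2 (fun j => (z j).im)) := by
  apply Complex.ext <;> simp [cLin, cx]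

lemma cLin_line {ℓ : ℕ} (f : Vsp ℓ →ₗ[ℝ] ℝ) (z w : Fin ℓ → ℂ) (t : ℂ) :
    cLin f (z + t • w) = cLin f z + t * cLin f w := by
  have e1 : (WithLp.toLp 2 (fun j => ((z + t • w) j).re) : Vsp ℓ) = WithLp.toLp 2 (fun j => (z j).re)
      + (t.re • WithLp.toLp 2 (fun j => (w j).re) - t.im • WithLp.toLp 2 (fun j => (w j).im)) := by
    ext j; simp
  have e2 : (WithLp.toLp 2 (fun j => ((z + t • w) j).im) : Vsp ℓ) = WithLp.toLp 2 (fun j => (z j).im)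
      + (t.re • WithLp.toLp 2 (fun j => (w j).im) + t.im • WithLp.toLp 2 (fun j => (w j).re)) := by
    ext j; simp
  rw [cLin_cx, e1, e2, cLin_cx, cLin_cx]
  apply Complex.ext <;> simp [cx]

lemma MA_path {ℓ n : ℕ} (γ : Fin n → (Vsp ℓ →ₗ[ℝ] ℝ)) (hne : (MA γ).Nonempty) :
    PathConnectedSpace (MA γ) := by
  rw [← isPathConnected_iff_pathConnectedSpace]
  obtain ⟨z, hz⟩ := hne
  refine ⟨z, hz, fun {w} hw => ?_⟩
  let B : Set ℂ := ⋃ i, {t : ℂ | cLin (γ i) (z + t • (w - z)) = 0}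
  have hB : B.Countable := by
    refine countable_iUnion fun i => Set.Subsingleton.countable ?_
    intro s hs t ht
    simp only [mem_setOf_eq, cLin_line] at hs ht
    have h0 : cLin (γ i) (w - z) ≠ 0 := by
      intro h
      rw [h, mul_zero, add_zero] at hs
      exact hz i hs
    have : (s - t) * cLin (γ i) (w - z) = 0 := by linear_combination hs - ht
    exact sub_eq_zero.1 ((mul_eq_zero.1 this).resolve_right h0)
  have hpc := hB.isPathConnected_compl_of_one_lt_rank (E := ℂ) (by rw [Complex.rank_real_complex]; norm_num)
  have h0 : (0 : ℂ) ∈ Bᶜ := by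
    simp only [B, mem_compl_iff, mem_iUnion, mem_setOf_eq, not_exists, zero_smul, add_zero]
    exact hz
  have h1 : (1 : ℂ) ∈ Bᶜ := by
    simp only [B, mem_compl_iff, mem_iUnion, mem_setOf_eq, not_exists, one_smul, add_sub_cancel]
    exact hw
  have hj := (hpc.joinedIn 0 h0 1 h1).map_continuousOn (f := fun t : ℂ => z + t • (w - z)) (by fun_prop)
  simp only [zero_smul, add_zero, one_smul, add_sub_cancel] at hj
  refine hj.mono ?_
  rintro _ ⟨t, ht, rfl⟩ i hi
  exact ht (mem_iUnion.2 ⟨i, hi⟩)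

lemma cx_smul {V : Type*} [AddCommGroup V] [Module ℝ V] (f : V →ₗ[ℝ] ℝ) (c : ℝ) (x y : V) :
    cx (c • f) x y = c * cx f x y := by
  apply Complex.ext <;> simp [cx]

lemma main_pi {ℓ d n : ℕ} (hℓ : ℓ = d + 1) (hd : 0 < d)
    (α : Fin n → (Vsp ℓ →ₗ[ℝ] ℝ)) (β : Vsp ℓ →ₗ[ℝ] ℝ)
    (hess : ∀ x, (∀ i, α i x = 0) → x = 0)
    (hgen : ∀ I : Finset (Fin n), (∃ x, x ≠ 0 ∧ ∀ i ∈ I, α i x = 0) →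
      ∃ y, (∀ i ∈ I, α i y = 0) ∧ β y ≠ 0)
    (p : Vsp ℓ) (hβp : β p = 1) (hp : ∀ j, α j p ≠ 0)
    (hkey : ∀ x, x ≠ 0 → (∀ j, 0 ≤ α j x * α j p) → 0 < β x) :
    (MA (Fin.snoc α β : Fin (n + 1) → (Vsp ℓ →ₗ[ℝ] ℝ))).Nonempty ∧
    ∀ x₀ : MA (Fin.snoc α β : Fin (n + 1) → (Vsp ℓ →ₗ[ℝ] ℝ)),
      Nontrivial (HomotopyGroup (Fin d) (MA (Fin.snoc α β : Fin (n + 1) → (Vsp ℓ →ₗ[ℝ] ℝ))) x₀) := by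
  classical
  have hn : Nonempty (Fin n) := by
    by_contra h
    rw [not_nonempty_iff] at h
    have := hess p (fun i => h.elim i)
    rw [this, map_zero] at hβp
    exact zero_ne_one hβp
  obtain ⟨L, P, hβL, hPL, hPp, hLP⟩ := split_LP (V := Vsp ℓ) (d := d) (by simp [hℓ]) β p hβp
  let α' : Fin n → (Vsp ℓ →ₗ[ℝ] ℝ) := fun j => (α j p)⁻¹ • α j
  have hz : ∀ j x, α' j x = 0 ↔ α j x = 0 := fun j x => by simp [α', hp j]
  have hcz : ∀ j x y, cx (α' j) x y ≠ 0 ↔ cx (α j) x y ≠ 0 := fun j x y => by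
    simp [α', cx_smul, hp j]
  obtain ⟨R, x, y, G, hR, hx, hy, hαS, hβS, hG, hGe, htop, hG0, hbot⟩ :=
    core2 hd α' β p (fun j => by simp [α', hp j]) hβp (by simpa only [hz] using hgen) (by
      intro w hw hβw
      by_contra! h
      have := hkey w hw (fun j => by
        have h1 := h j
        have h2 : α j w * α j p = α' j w * (α j p) ^ 2 := by
          have := hp j
          simp only [α', LinearMap.smul_apply, smul_eq_mul]
          field_simp
        rw [h2]
        exact mul_nonneg h1 (sq_nonneg _))
      linarith) L hβL (Function.LeftInverse.injective hPL)
  have hmem : ∀ z : Fin ℓ → ℂ, z ∈ MA (Fin.snoc α β : Fin (n + 1) → (Vsp ℓ →ₗ[ℝ] ℝ)) ↔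
      (∀ j, cx (α' j) (WithLp.toLp 2 (fun j => (z j).re)) (WithLp.toLp 2 (fun j => (z j).im)) ≠ 0) ∧
      cx β (WithLp.toLp 2 (fun j => (z j).re)) (WithLp.toLp 2 (fun j => (z j).im)) ≠ 0 := by
    intro z
    simp only [hcz]
    simp only [← cLin_cx]
    constructor
    · intro h
      exact ⟨fun j => by simpa using h j.castSucc, by simpa using h (Fin.last n)⟩
    · rintro ⟨h1, h2⟩ i
      refine Fin.lastCases ?_ (fun j => ?_) i
      · simpa using h2
      · simpa using h1 j
  let σ₀ : ℝ × (Fin d → ℝ) → (Fin ℓ → ℂ) := fun w i => ⟨x w i, y w i⟩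
  have hσ₀c : Continuous σ₀ := by
    refine continuous_pi fun i => ?_
    have h1 : Continuous fun w => x w i := by fun_prop
    have h2 : Continuous fun w => y w i := by fun_prop
    exact Complex.equivRealProdCLM.symm.continuous.comp (h1.prodMk h2)
  have hσ₀ : ∀ w ∈ sphere (0 : ℝ × (Fin d → ℝ)) 1,
      σ₀ w ∈ MA (Fin.snoc α β : Fin (n + 1) → (Vsp ℓ →ₗ[ℝ] ℝ)) := fun w hw =>
    (hmem _).2 ⟨hαS w hw, hβS w hw⟩
  have hne : (MA (Fin.snoc α β : Fin (n + 1) → (Vsp ℓ →ₗ[ℝ] ℝ))).Nonempty :=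
    ⟨_, hσ₀ (1, 0) (by simp [Prod.norm_def])⟩
  refine ⟨hne, fun x₀ => ?_⟩
  by_contra hnt
  rw [not_nontrivial_iff_subsingleton] at hnt
  have := MA_path _ hne
  let σ : ℝ × (Fin d → ℝ) → MA (Fin.snoc α β : Fin (n + 1) → (Vsp ℓ →ₗ[ℝ] ℝ)) := fun w =>
    if h : σ₀ w ∈ MA (Fin.snoc α β : Fin (n + 1) → (Vsp ℓ →ₗ[ℝ] ℝ)) then ⟨σ₀ w, h⟩ else x₀
  have hσe : ∀ w ∈ sphere (0 : ℝ × (Fin d → ℝ)) 1, (σ w : Fin ℓ → ℂ) = σ₀ w := fun w hw => by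
    simp only [σ, dif_pos (hσ₀ w hw)]
  have hσc : ContinuousOn σ (sphere 0 1) := by
    rw [Topology.IsInducing.subtypeVal.continuousOn_iff]
    exact hσ₀c.continuousOn.congr hσe
  obtain ⟨F, hF, hFσ⟩ := fill_main d hd x₀ (fun f => Quotient.exact (s := GenLoop.Homotopic.setoid _ _)
    (hnt.elim (Quotient.mk _ f) (Quotient.mk _ GenLoop.const))) σ hσc
  have hFc : ContinuousOn (fun w => (F w : Fin ℓ → ℂ)) (closedBall 0 1) :=
    continuous_subtype_val.comp_continuousOn hF
  have hFm := fun w => (hmem _).1 (F w).2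
  refine core1 hd α' β p hβp L P hβL hPL hPp hLP R hR x y G hG hGe htop hG0 hbot
    (fun w => WithLp.toLp 2 (fun j => ((F w : Fin ℓ → ℂ) j).re))
    (fun w => WithLp.toLp 2 (fun j => ((F w : Fin ℓ → ℂ) j).im)) ?_ ?_ ?_ ?_
    (fun w _ => (hFm w).1) (fun w _ => (hFm w).2)
  · exact (show Continuous fun z : Fin ℓ → ℂ => (WithLp.toLp 2 (fun j => (z j).re) : Vsp ℓ) by
      fun_prop).comp_continuousOn hFc
  · exact (show Continuous fun z : Fin ℓ → ℂ => (WithLp.toLp 2 (fun j => (z j).im) : Vsp ℓ) by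
      fun_prop).comp_continuousOn hFc
  · intro w hw
    simp only [hFσ hw, hσe w hw]; rfl
  · intro w hw
    simp only [hFσ hw, hσe w hw]; rfl

end Helpers

/-- Adding a generic hyperplane destroys asphericity: if `ker β` is generic with
respect to the central essential arrangement `A` in `ℝ^ℓ` (`ℓ ≥ 3`), then
`A ∪ {ker β}` admits a locally consistent but globally inconsistent system of
half-spaces; consequently `π_{ℓ-1} ≠ 0` and the complement is not aspherical. -/
theorem adding_generic_hyperplane_not_aspherical (ℓ n : ℕ) (hℓ : 3 ≤ ℓ)
    (α : Fin n → (Vsp ℓ →ₗ[ℝ] ℝ)) (β : Vsp ℓ →ₗ[ℝ] ℝ)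
    (hα : ∀ i, α i ≠ 0)
    (hess : (⋂ i, (LinearMap.ker (α i) : Set (Vsp ℓ))) = {0})
    (hβ : β ≠ 0)
    (hgen : ∀ I : Finset (Fin n),
      (⋂ i ∈ I, (LinearMap.ker (α i) : Set (Vsp ℓ))) ≠ {0} →
      ¬ (⋂ i ∈ I, (LinearMap.ker (α i) : Set (Vsp ℓ))) ⊆ (LinearMap.ker β : Set (Vsp ℓ))) :
    (∃ ε : Fin (n + 1) → ℝ, (∀ i, ε i = 1 ∨ ε i = -1) ∧
      LocallyConsistent ((Fin.snoc α β : Fin (n + 1) → (Vsp ℓ →ₗ[ℝ] ℝ))) ε ∧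
      (⋂ i, {x : Vsp ℓ | 0 < ε i * (Fin.snoc α β : Fin (n + 1) → (Vsp ℓ →ₗ[ℝ] ℝ)) i x}) = ∅) ∧
    (∀ x₀ : MA ((Fin.snoc α β : Fin (n + 1) → (Vsp ℓ →ₗ[ℝ] ℝ))),
      Nontrivial (HomotopyGroup.Pi (ℓ - 1) (MA ((Fin.snoc α β : Fin (n + 1) → (Vsp ℓ →ₗ[ℝ] ℝ)))) x₀)) ∧
    ¬ (∀ m : ℕ, 2 ≤ m → ∀ x₀ : MA ((Fin.snoc α β : Fin (n + 1) → (Vsp ℓ →ₗ[ℝ] ℝ))),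
      Subsingleton (HomotopyGroup.Pi m (MA ((Fin.snoc α β : Fin (n + 1) → (Vsp ℓ →ₗ[ℝ] ℝ)))) x₀)) := by
  have hess' : ∀ x, (∀ i, α i x = 0) → x = 0 := by
    intro x hx
    have : x ∈ (⋂ i, (LinearMap.ker (α i) : Set (Vsp ℓ))) := by simpa using hx
    rw [hess] at this
    simpa using this
  have hgen' : ∀ I : Finset (Fin n), (∃ x, x ≠ 0 ∧ ∀ i ∈ I, α i x = 0) →
      ∃ y, (∀ i ∈ I, α i y = 0) ∧ β y ≠ 0 := by
    rintro I ⟨x, hx0, hx⟩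
    have h := hgen I (by
      intro h
      have : x ∈ (⋂ i ∈ I, (LinearMap.ker (α i) : Set (Vsp ℓ))) := by simpa using hx
      rw [h] at this
      exact hx0 (by simpa using this))
    rw [Set.not_subset] at h
    obtain ⟨y, hy, hyβ⟩ := h
    exact ⟨y, by simpa using hy, by simpa using hyβ⟩
  obtain ⟨p, hβp, hp, hkey⟩ := la_p α β hα hβ hess' hgen'
  have hpi := main_pi (d := ℓ - 1) (by omega) (by omega) α β hess' hgen' p hβp hp hkey
  refine ⟨?_, hpi.2, ?_⟩
  · refine ⟨Fin.snoc (fun j => if 0 < α j p then (1 : ℝ) else -1) (-1), ?_, ?_, ?_⟩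
    · intro i
      refine Fin.lastCases ?_ (fun j => ?_) i
      · simp
      · simp only [Fin.snoc_castSucc]
        split_ifs <;> simp
    · intro I hI
      have hex : ∃ x, x ≠ 0 ∧ ∀ i ∈ I, (Fin.snoc α β : Fin (n + 1) → (Vsp ℓ →ₗ[ℝ] ℝ)) i x = 0 := by
        by_contra! h
        apply hI
        ext x
        simp only [Set.mem_iInter, SetLike.mem_coe, LinearMap.mem_ker, Set.mem_singleton_iff]
        constructor
        · intro hx
          by_contra hx0
          obtain ⟨i, hi, hi'⟩ := h x hx0
          exact hi' (hx i hi)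
        · rintro rfl i _
          simp
      obtain ⟨x, hx1, hx2⟩ := la_local α β hgen' p hβp hp I hex
      refine ⟨x, fun j => ?_⟩
      refine Fin.lastCases ?_ (fun j => ?_) j
      · intro h
        have := hx2 (fun z hz => by
          have := h (a := z) (by simpa using hz)
          simpa using this)
        simpa using this
      · intro h
        have := hx1 j (fun z hz => by
          have := h (a := z) (by simpa using hz)
          simpa using this)
        simp only [Fin.snoc_castSucc]
        split_ifs with h0
        · simpa using (pos_iff_pos_of_mul_pos this).1 h0
        · have h1 : α j p < 0 := lt_of_le_of_ne (not_lt.1 h0) (hp j)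
          have := (neg_iff_neg_of_mul_pos this).1 h1
          linarith
    · rw [Set.eq_empty_iff_forall_notMem]
      intro x hx
      simp only [Set.mem_iInter] at hx
      have h1 : 0 < (Fin.snoc (fun j => if 0 < α j p then (1 : ℝ) else -1) (-1) : Fin (n + 1) → ℝ)
        (Fin.last n) * (Fin.snoc α β : Fin (n + 1) → (Vsp ℓ →ₗ[ℝ] ℝ)) (Fin.last n) x := hx (Fin.last n)
      have h2 : ∀ j : Fin n, 0 < (Fin.snoc (fun j => if 0 < α j p then (1 : ℝ) else -1) (-1) :
        Fin (n + 1) → ℝ) j.castSucc * (Fin.snoc α β : Fin (n + 1) → (Vsp ℓ →ₗ[ℝ] ℝ)) j.castSucc x :=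
        fun j => hx j.castSucc
      simp only [Fin.snoc_last] at h1
      simp only [Fin.snoc_castSucc] at h2
      have h3 := hkey x (by rintro rfl; simp at h1) (fun j => by
        have h := h2 j
        split_ifs at h with h0
        · exact mul_nonneg (by linarith) h0.le
        · exact mul_nonneg_of_nonpos_of_nonpos (by linarith) (not_lt.1 h0))
      linarith
  · intro h
    obtain ⟨z, hz⟩ := hpi.1
    exact (not_nontrivial_iff_subsingleton.2 (h (ℓ - 1) (by omega) ⟨z, hz⟩)) (hpi.2 ⟨z, hz⟩)
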